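/- Suppose the market input (X_p, 𝒫, 𝔓) admits no weak free lunch with vanishing risk and let μ₁,…,μ_n be defined by μ_i([0, K]) = p_i′(K). Assume G : ℝ₊^n → [−∞, ∞) is upper semi-continuous and, for every M > 1, the function G_M(s₁,…,s_n) := G(s₁,…,s_n) − (s₁ + … + s_n)/M is bounded from above. Then the put-based superhedging price equals the supremum over calibrated supermartingale models: V^{(p)}_{μ,𝔓}(G) = sup_{ℙ ∈ M⁻_{μ,𝔓}} E_ℙ[G]. -/

import Mathlib

open MeasureTheory Set Filter Topology
open scoped ENNReal NNReal Classical

noncomputable section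

namespace RobustFin

/-- Canonical path space: the values `S₀, S₁, …, S_n` of the asset. -/
abbrev Path (n : ℕ) := Fin (n + 1) → ℝ

/-- Paths starting at `s₀` with nonnegative coordinates: the canonical space `Ω`. -/
def Omega (n : ℕ) (s₀ : ℝ) : Set (Path n) := {ω | ω 0 = s₀ ∧ ∀ i, 0 ≤ ω i}

/-- The first `j` coordinates `S₁, …, S_j` of a path. -/
def restr {n : ℕ} (j : Fin n) (ω : Path n) : Fin j → ℝ :=
  fun i => ω ⟨(i : ℕ) + 1, by have h1 := i.isLt; have h2 := j.isLt; omega⟩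

/-- The coordinates `S₁, …, S_n` of a path. -/
def tailCoords {n : ℕ} (ω : Path n) : Fin n → ℝ := fun i => ω i.succ

/-- A dynamic trading strategy: bounded measurable positions `Δ_j(S₁,…,S_j)`. -/
structure Dyn (n : ℕ) where
  pos : (j : Fin n) → (Fin j → ℝ) → ℝ
  meas : ∀ j, Measurable (pos j)
  bdd : ∀ j, ∃ C, ∀ x, |pos j x| ≤ C

/-- No short selling: all dynamic positions are nonnegative. -/
def Dyn.Nonneg {n : ℕ} (D : Dyn n) : Prop := ∀ j x, 0 ≤ D.pos j x

/-- Gains from dynamic trading: `Σ_j Δ_j(S₁,…,S_j)(S_{j+1} − S_j)`. -/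
def Dyn.gains {n : ℕ} (D : Dyn n) (ω : Path n) : ℝ :=
  ∑ j : Fin n, D.pos j (restr j ω) * (ω j.succ - ω j.castSucc)

/-- A static option portfolio: a constant (cash) position plus a finite linear
combination of options with maturity indices `idx` and nonnegative strikes. -/
structure Static (n : ℕ) where
  const : ℝ
  m : ℕ
  coeff : Fin m → ℝ
  idx : Fin m → Fin n
  strike : Fin m → ℝ
  strike_nonneg : ∀ k, 0 ≤ strike k

/-- Payoff of the portfolio when the options are call options. -/
def Static.callPayoff {n : ℕ} (X : Static n) (ω : Path n) : ℝ :=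
  X.const + ∑ k, X.coeff k * max (ω (X.idx k).succ - X.strike k) 0

/-- Payoff of the portfolio when the options are put options. -/
def Static.putPayoff {n : ℕ} (X : Static n) (ω : Path n) : ℝ :=
  X.const + ∑ k, X.coeff k * max (X.strike k - ω (X.idx k).succ) 0

/-- Price of a static portfolio, given the unit option prices `c i K`;
this is the (unique) linear pricing functional determined by the prices. -/
def Static.price {n : ℕ} (X : Static n) (c : Fin n → ℝ → ℝ) : ℝ :=
  X.const + ∑ k, X.coeff k * c (X.idx k) (X.strike k)

/-- Expectation of a real payoff, valued in `EReal`, with the convention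
`∞ − ∞ = −∞` (in `EReal`, `⊤ - ⊤ = ⊥`). -/
def eexp {n : ℕ} (P : Measure (Path n)) (f : Path n → ℝ) : EReal :=
  ((∫⁻ ω, ENNReal.ofReal (f ω) ∂P : ℝ≥0∞) : EReal) -
    ((∫⁻ ω, ENNReal.ofReal (-(f ω)) ∂P : ℝ≥0∞) : EReal)

/-- The positive part of an extended real number, in `ℝ≥0∞`. -/
def posE (x : EReal) : ℝ≥0∞ := if x = ⊤ then ⊤ else ENNReal.ofReal x.toReal

/-- Expectation of an `EReal`-valued payoff, with the convention `∞ − ∞ = −∞`. -/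
def eexpE {n : ℕ} (P : Measure (Path n)) (f : Path n → EReal) : EReal :=
  ((∫⁻ ω, posE (f ω) ∂P : ℝ≥0∞) : EReal) - ((∫⁻ ω, posE (-(f ω)) ∂P : ℝ≥0∞) : EReal)

/-- A market calibrated model for the market with static payoffs `pay` (calls or puts),
prices `c` and prediction set `P`. -/
def Calibrated {n : ℕ} (pay : Static n → Path n → ℝ) (c : Fin n → ℝ → ℝ)
    (P : Set (Path n)) (Q : Measure (Path n)) : Prop :=
  IsProbabilityMeasure Q ∧ Q P = 1 ∧
    ∀ (X : Static n) (D : Dyn n), D.Nonneg →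
      eexp Q (fun ω => pay X ω + D.gains ω) ≤ (X.price c : EReal)

/-- A weak free lunch with vanishing risk. -/
def WFLVR {n : ℕ} (pay : Static n → Path n → ℝ) (c : Fin n → ℝ → ℝ)
    (P : Set (Path n)) : Prop :=
  ∃ (Xs : ℕ → Static n) (Ds : ℕ → Dyn n) (X : Static n) (D : Dyn n) (L : ℝ),
    (∀ k, (Ds k).Nonneg) ∧ D.Nonneg ∧
    (∀ ω ∈ P, Tendsto (fun k => pay (Xs k) ω + (Ds k).gains ω) atTop (nhds 0)) ∧
    (∀ k, ∀ ω ∈ P, pay X ω + D.gains ω ≤ pay (Xs k) ω + (Ds k).gains ω) ∧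
    Tendsto (fun k => (Xs k).price c) atTop (nhds L) ∧ L < 0

/-- A robust uniformly strong arbitrage. -/
def RobustArbitrage {n : ℕ} (pay : Static n → Path n → ℝ) (c : Fin n → ℝ → ℝ)
    (P : Set (Path n)) : Prop :=
  ∃ (X : Static n) (D : Dyn n), D.Nonneg ∧ X.price c < 0 ∧
    ∀ ω ∈ P, 0 ≤ pay X ω + D.gains ω

/-- The superhedging price of `G` over semi-static strategies (no short selling). -/
def V {n : ℕ} (pay : Static n → Path n → ℝ) (c : Fin n → ℝ → ℝ)
    (P : Set (Path n)) (G : Path n → EReal) : EReal :=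
  sInf {q : EReal | ∃ (X : Static n) (D : Dyn n), D.Nonneg ∧ q = (X.price c : EReal) ∧
    ∀ ω ∈ P, G ω ≤ ((pay X ω + D.gains ω : ℝ) : EReal)}

/-- The superhedging price of `G` when the dynamic positions may take both signs. -/
def Vsigned {n : ℕ} (pay : Static n → Path n → ℝ) (c : Fin n → ℝ → ℝ)
    (P : Set (Path n)) (G : Path n → EReal) : EReal :=
  sInf {q : EReal | ∃ (X : Static n) (D : Dyn n), q = (X.price c : EReal) ∧
    ∀ ω ∈ P, G ω ≤ ((pay X ω + D.gains ω : ℝ) : EReal)}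

/-- `Π_μ`: probability measures on the path space with marginals `δ_{s₀}, μ₁, …, μ_n`. -/
def PiMu {n : ℕ} (s₀ : ℝ) (μ : Fin n → Measure ℝ) : Set (Measure (Path n)) :=
  {π | IsProbabilityMeasure π ∧ π (Omega n s₀) = 1 ∧
       ∀ i : Fin n, π.map (fun ω => ω i.succ) = μ i}

/-- The coordinate process is a supermartingale in its natural filtration:
for every Borel `A ⊆ ℝ₊^j`, `∫ 1_A(S₁,…,S_j)(S_{j+1} − S_j) dπ ≤ 0`. -/
def IsSupermartingaleLaw {n : ℕ} (π : Measure (Path n)) : Prop :=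
  ∀ (j : Fin n) (A : Set (Fin j → ℝ)), MeasurableSet A →
    ∫ ω, Set.indicator A (fun _ => (1 : ℝ)) (restr j ω) * (ω j.succ - ω j.castSucc) ∂π ≤ 0

/-- `M⁻_μ`: calibrated supermartingale measures. -/
def MSet {n : ℕ} (s₀ : ℝ) (μ : Fin n → Measure ℝ) : Set (Measure (Path n)) :=
  {π ∈ PiMu s₀ μ | IsSupermartingaleLaw π}

/-- `M⁻_{μ,𝔓}`: calibrated supermartingale measures giving full mass to `P`. -/
def MSetP {n : ℕ} (s₀ : ℝ) (μ : Fin n → Measure ℝ) (P : Set (Path n)) :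
    Set (Measure (Path n)) :=
  {π ∈ MSet s₀ μ | π P = 1}

/-- Assumption A on the marginals. -/
def AssumptionA {n : ℕ} (s₀ : ℝ) (μ : Fin n → Measure ℝ) : Prop :=
  (∀ i, ∫ x, x ∂(μ i) ≤ s₀) ∧
  (∀ i j : Fin n, i ≤ j → ∫ x, x ∂(μ j) ≤ ∫ x, x ∂(μ i)) ∧
  (∀ φ : ℝ → ℝ, ConcaveOn ℝ Set.univ φ → Monotone φ → (∀ x, 0 ≤ φ x) →
    ∀ i j : Fin n, i ≤ j → ∫ x, φ x ∂(μ j) ≤ ∫ x, φ x ∂(μ i))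

/-- Condition C (i): each `c_i` is nonnegative, convex and nonincreasing on `ℝ₊`. -/
def CondC1 {n : ℕ} (c : Fin n → ℝ → ℝ) : Prop :=
  ∀ i, (∀ x, 0 ≤ x → 0 ≤ c i x) ∧ ConvexOn ℝ (Set.Ici 0) (c i) ∧ AntitoneOn (c i) (Set.Ici 0)

/-- Condition C (ii): `s₀ ≥ c₁(0) ≥ … ≥ c_n(0) ≥ 0` and `c_i'(0+) ≥ −1`
(the latter expressed, for convex `c_i`, through the slopes at `0`). -/
def CondC2 {n : ℕ} (s₀ : ℝ) (c : Fin n → ℝ → ℝ) : Prop :=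
  (∀ i, c i 0 ≤ s₀) ∧ (∀ i j : Fin n, i ≤ j → c j 0 ≤ c i 0) ∧ (∀ i, 0 ≤ c i 0) ∧
    (∀ i, ∀ K : ℝ, 0 < K → c i 0 - K ≤ c i K)

/-- Condition C (iii): `c_i(K) → 0` as `K → ∞`. -/
def CondC3 {n : ℕ} (c : Fin n → ℝ → ℝ) : Prop :=
  ∀ i, Tendsto (c i) atTop (nhds 0)

/-- Condition C (iv): for every `x ≥ 0`, `c_i(0) − c_i(x)` is nonincreasing in `i`. -/
def CondC4 {n : ℕ} (c : Fin n → ℝ → ℝ) : Prop :=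
  ∀ x : ℝ, 0 ≤ x → ∀ i j : Fin n, i ≤ j → c j 0 - c j x ≤ c i 0 - c i x

/-- Condition C. -/
def CondC {n : ℕ} (s₀ : ℝ) (c : Fin n → ℝ → ℝ) : Prop :=
  CondC1 c ∧ CondC2 s₀ c ∧ CondC3 c ∧ CondC4 c

/-- Condition P (i). -/
def CondP1 {n : ℕ} (p : Fin n → ℝ → ℝ) : Prop :=
  ∀ i, (∀ x, 0 ≤ x → 0 ≤ p i x) ∧ ConvexOn ℝ (Set.Ici 0) (p i) ∧ MonotoneOn (p i) (Set.Ici 0)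

/-- Condition P (ii): `s₀ ≥ lim (x − p₁(x)) ≥ … ≥ 0` and `0 ≤ p_i'(0+) ≤ 1`. -/
def CondP2 {n : ℕ} (s₀ : ℝ) (p : Fin n → ℝ → ℝ) : Prop :=
  (∃ L : Fin n → ℝ,
    (∀ i, Tendsto (fun x => x - p i x) atTop (nhds (L i))) ∧
    (∀ i, L i ≤ s₀) ∧ (∀ i j : Fin n, i ≤ j → L j ≤ L i) ∧ (∀ i, 0 ≤ L i)) ∧
  (∃ d : Fin n → ℝ,
    (∀ i, Tendsto (fun K => (p i K - p i 0) / K) (nhdsWithin 0 (Set.Ioi 0)) (nhds (d i))) ∧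
    (∀ i, 0 ≤ d i ∧ d i ≤ 1))

/-- Condition P (iii): `p_i(K) → 0` as `K → 0` (within `ℝ₊`). -/
def CondP3 {n : ℕ} (p : Fin n → ℝ → ℝ) : Prop :=
  ∀ i, Tendsto (p i) (nhdsWithin 0 (Set.Ici 0)) (nhds 0)

/-- Condition P (iv): `p_i(x)` is nondecreasing in `i`. -/
def CondP4 {n : ℕ} (p : Fin n → ℝ → ℝ) : Prop :=
  ∀ x : ℝ, 0 ≤ x → ∀ i j : Fin n, i ≤ j → p i x ≤ p j x

/-- Condition P. -/
def CondP {n : ℕ} (s₀ : ℝ) (p : Fin n → ℝ → ℝ) : Prop :=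
  CondP1 p ∧ CondP2 s₀ p ∧ CondP3 p ∧ CondP4 p

/-- The measures `μ_i` defined from the put prices by `μ_i([0,K]) = p_i'(K)`;
equivalently, `p_i(K) = ∫ (K − x)⁺ μ_i(dx)`. -/
def PutPricesFrom {n : ℕ} (p : Fin n → ℝ → ℝ) (μ : Fin n → Measure ℝ) : Prop :=
  (∀ i, IsProbabilityMeasure (μ i)) ∧ (∀ i, μ i (Set.Iio 0) = 0) ∧
  (∀ i, Integrable (fun x => x) (μ i)) ∧
  (∀ i, ∀ K : ℝ, 0 ≤ K → p i K = ∫ x, max (K - x) 0 ∂(μ i))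

/-- The path `(s₀, s₁, …, s_i, x, s_{i+2}, …, s_n)`. -/
def mkPath {n : ℕ} (s₀ : ℝ) (i : Fin n) (s : Fin i → ℝ) (x : ℝ)
    (t : Fin (n - ((i : ℕ) + 1)) → ℝ) : Path n := fun j =>
  if h0 : (j : ℕ) = 0 then s₀
  else if h1 : (j : ℕ) ≤ (i : ℕ) then
    s ⟨(j : ℕ) - 1, by have := j.isLt; have := i.isLt; omega⟩
  else if h2 : (j : ℕ) = (i : ℕ) + 1 then x
  else t ⟨(j : ℕ) - (i : ℕ) - 2, by have := j.isLt; have := i.isLt; omega⟩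

/-- The family `β_i : ℝ₊^i → ℝ` defined recursively by `β_n = 0` and
`β_i(s₁,…,s_i) = (sup_{s_{i+2},…,s_n} limsup_{x→∞} ((β_{i+1}(s₁,…,s_i,x)
 + G(s₁,…,s_i,x,s_{i+2},…,s_n)/x)·1_𝔓)) ∨ 0`. -/
def IsBetaFamily {n : ℕ} (s₀ : ℝ) (P : Set (Path n)) (G : (Fin n → ℝ) → EReal)
    (β : (i : Fin (n + 1)) → (Fin i → ℝ) → ℝ) : Prop :=
  (∀ s, β (Fin.last n) s = 0) ∧
  ∀ (i : Fin n) (s : Fin i → ℝ), (∀ k, 0 ≤ s k) →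
    (β ⟨(i : ℕ), by have := i.isLt; omega⟩ s : EReal) =
      max 0 (⨆ (t : Fin (n - ((i : ℕ) + 1)) → ℝ) (_ : ∀ k, 0 ≤ t k),
        Filter.limsup (fun x : ℝ =>
          if mkPath s₀ i s x t ∈ P then
            ((β ⟨(i : ℕ) + 1, by have := i.isLt; omega⟩ (Fin.snoc s x) : ℝ) : EReal)
              + G (tailCoords (mkPath s₀ i s x t)) * ((x⁻¹ : ℝ) : EReal)
          else 0) Filter.atTop)

/-- Gains of the dynamic strategy `(β_i)`: `β₀(S₁ − s₀) + Σ_i β_i(S₁,…,S_i)(S_{i+1} − S_i)`. -/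
def gainsOf {n : ℕ} (β : (i : Fin (n + 1)) → (Fin i → ℝ) → ℝ) (ω : Path n) : ℝ :=
  ∑ j : Fin n, β ⟨(j : ℕ), by have := j.isLt; omega⟩ (restr j ω) * (ω j.succ - ω j.castSucc)

/-- The penalty function `λ_𝔓(s₁,…,s_n) = (1 + s₁ + … + s_n)·1{(s₁,…,s_n) ∉ 𝔓}`. -/
def lambdaP {n : ℕ} (P : Set (Path n)) (ω : Path n) : ℝ :=
  if ω ∈ P then 0 else 1 + ∑ i : Fin n, ω i.succ

/-- `min(s₀, s₁, …, s_m)`. -/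
def pmin {m : ℕ} (s₀ : ℝ) (s : Fin m → ℝ) : ℝ :=
  Finset.univ.inf' Finset.univ_nonempty
    (fun j : Fin (m + 1) =>
      if h : (j : ℕ) = 0 then s₀ else s ⟨(j : ℕ) - 1, by have := j.isLt; omega⟩)

/-- `max(s₀, s₁, …, s_m)`. -/
def pmax {m : ℕ} (s₀ : ℝ) (s : Fin m → ℝ) : ℝ :=
  Finset.univ.sup' Finset.univ_nonempty
    (fun j : Fin (m + 1) =>
      if h : (j : ℕ) = 0 then s₀ else s ⟨(j : ℕ) - 1, by have := j.isLt; omega⟩)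

/-!
By the M. Riesz extension theorem, every price below the superhedging price of `G` is dominated by
the value `ℓ G` of a linear functional `ℓ` on continuous functions of linear growth which itself
lies below the superhedging price. The Riesz–Markov theorem turns `ℓ` into a measure `Q`. As `‖ω‖`
can be superhedged, `Q` is a probability measure, and `ℓ f` can exceed `∫ f dQ` only through linear
growth of `f` at infinity. A put and its negative are both bounded above on `ℝ₊`, which gives the
marginals of `Q`; a short position `-φ(S₁, …, S_j) (S_{j+1} - S_j)` with `φ ≥ 0` compactly
supported is bounded above as well, which gives the supermartingale property. Being of sublinear
growth, `G` is a limit of Lipschitz majorants of sublinear growth, so that its value is transferred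
to `Q` too.
-/

open scoped CompactlySupported

/-! ### Superhedging calculus -/

namespace Static

variable {n : ℕ}

/-- The portfolio holding only the cash amount `c`. -/
def cash (n : ℕ) (c : ℝ) : Static n := ⟨c, 0, Fin.elim0, Fin.elim0, Fin.elim0, fun k => k.elim0⟩

/-- The portfolio holding `c` puts with maturity index `i` and strike `K`. -/
def puts (c : ℝ) (i : Fin n) {K : ℝ} (hK : 0 ≤ K) : Static n :=
  ⟨0, 1, fun _ => c, fun _ => i, fun _ => K, fun _ => hK⟩

instance : Add (Static n) where
  add X Y := ⟨X.const + Y.const, X.m + Y.m, Fin.append X.coeff Y.coeff, Fin.append X.idx Y.idx,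
    Fin.append X.strike Y.strike,
    Fin.addCases (by simpa using X.strike_nonneg) (by simpa using Y.strike_nonneg)⟩

instance : SMul ℝ (Static n) where
  smul t X := ⟨t * X.const, X.m, fun k => t * X.coeff k, X.idx, X.strike, X.strike_nonneg⟩

variable (X Y : Static n) (p : Fin n → ℝ → ℝ) (ω : Path n) (t : ℝ)

lemma price_cash : (cash n t).price p = t := by
  change t + ∑ k : Fin 0, _ = t
  simp

lemma putPayoff_cash : (cash n t).putPayoff ω = t := by
  change t + ∑ k : Fin 0, _ = t
  simp

lemma price_puts (i : Fin n) {K : ℝ} (hK : 0 ≤ K) : (puts t i hK).price p = t * p i K := by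
  change 0 + ∑ _ : Fin 1, t * p i K = _
  simp

lemma putPayoff_puts (i : Fin n) {K : ℝ} (hK : 0 ≤ K) :
    (puts t i hK).putPayoff ω = t * max (K - ω i.succ) 0 := by
  change 0 + ∑ _ : Fin 1, t * max (K - ω i.succ) 0 = _
  simp

lemma price_add : (X + Y).price p = X.price p + Y.price p := by
  change X.const + Y.const + ∑ k, Fin.append X.coeff Y.coeff k *
    p (Fin.append X.idx Y.idx k) (Fin.append X.strike Y.strike k) = _
  simp only [Fin.sum_univ_add, Fin.append_left, Fin.append_right, price]
  ring

lemma putPayoff_add : (X + Y).putPayoff ω = X.putPayoff ω + Y.putPayoff ω := by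
  change X.const + Y.const + ∑ k, Fin.append X.coeff Y.coeff k *
    max (Fin.append X.strike Y.strike k - ω (Fin.append X.idx Y.idx k).succ) 0 = _
  simp only [Fin.sum_univ_add, Fin.append_left, Fin.append_right, putPayoff]
  ring

lemma price_smul : (t • X).price p = t * X.price p := by
  change t * X.const + ∑ k, t * X.coeff k * p (X.idx k) (X.strike k) = _
  simp only [price, mul_add, Finset.mul_sum, mul_assoc]

lemma putPayoff_smul : (t • X).putPayoff ω = t * X.putPayoff ω := by
  change t * X.const + ∑ k, t * X.coeff k * max (X.strike k - ω (X.idx k).succ) 0 = _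
  simp only [putPayoff, mul_add, Finset.mul_sum, mul_assoc]

end Static

/-- The price increment `S_{j+1} − S_j`. -/
def increment {n : ℕ} (j : Fin n) (ω : Path n) : ℝ := ω j.succ - ω j.castSucc

namespace Dyn

variable {n : ℕ}

instance : Zero (Dyn n) where
  zero := ⟨fun _ _ => 0, fun _ => measurable_const, fun _ => ⟨0, by simp⟩⟩

instance : Add (Dyn n) where
  add D E := ⟨fun j x => D.pos j x + E.pos j x, fun j => (D.meas j).add (E.meas j), fun j => by
    obtain ⟨C, hC⟩ := D.bdd j
    obtain ⟨C', hC'⟩ := E.bdd j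
    exact ⟨C + C', fun x => (abs_add_le _ _).trans (add_le_add (hC x) (hC' x))⟩⟩

instance : SMul ℝ (Dyn n) where
  smul t D := ⟨fun j x => t * D.pos j x, fun j => (D.meas j).const_mul t, fun j => by
    obtain ⟨C, hC⟩ := D.bdd j
    refine ⟨|t| * C, fun x => ?_⟩
    rw [abs_mul]
    exact mul_le_mul_of_nonneg_left (hC x) (abs_nonneg t)⟩

/-- The strategy whose only position is `φ(S₁, …, S_j)`, held from date `j` to date `j + 1`. -/
def single (j : Fin n) (φ : (Fin j → ℝ) → ℝ) (hφ : Measurable φ) (hb : ∃ C, ∀ x, |φ x| ≤ C) :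
    Dyn n where
  pos := Function.update (fun _ _ => 0) j φ
  meas k := by
    obtain rfl | hk := eq_or_ne k j
    · simpa using hφ
    · simp [hk, measurable_const]
  bdd k := by
    obtain rfl | hk := eq_or_ne k j
    · simpa using hb
    · exact ⟨0, by simp [hk]⟩

variable {D E : Dyn n} (ω : Path n)

lemma Nonneg.zero : (0 : Dyn n).Nonneg := fun _ _ => le_rfl

lemma Nonneg.add (hD : D.Nonneg) (hE : E.Nonneg) : (D + E).Nonneg :=
  fun j x => add_nonneg (hD j x) (hE j x)

lemma Nonneg.smul {t : ℝ} (ht : 0 ≤ t) (hD : D.Nonneg) : (t • D).Nonneg :=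
  fun j x => mul_nonneg ht (hD j x)

lemma Nonneg.single {j : Fin n} {φ : (Fin j → ℝ) → ℝ} {hφ : Measurable φ}
    {hb : ∃ C, ∀ x, |φ x| ≤ C} (h : ∀ x, 0 ≤ φ x) : (Dyn.single j φ hφ hb).Nonneg := by
  intro k x
  obtain rfl | hk := eq_or_ne k j
  · simpa [Dyn.single] using h x
  · simp [Dyn.single, hk]

lemma gains_zero : (0 : Dyn n).gains ω = 0 :=
  Finset.sum_eq_zero fun _ _ => zero_mul _

lemma gains_add : (D + E).gains ω = D.gains ω + E.gains ω :=
  (Finset.sum_congr rfl fun _ _ => add_mul _ _ _).trans Finset.sum_add_distrib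

lemma gains_smul (t : ℝ) : (t • D).gains ω = t * D.gains ω :=
  (Finset.sum_congr rfl fun _ _ => mul_assoc _ _ _).trans (Finset.mul_sum _ _ _).symm

lemma gains_single (j : Fin n) (φ : (Fin j → ℝ) → ℝ) (hφ : Measurable φ)
    (hb : ∃ C, ∀ x, |φ x| ≤ C) :
    (single j φ hφ hb).gains ω = φ (restr j ω) * increment j ω := by
  refine (Finset.sum_eq_single j (fun k _ hk => ?_) (by simp)).trans ?_
  · simp [single, hk]
  · simp [single, increment]

end Dyn

/-- The payoff `f` is dominated on `P` by a put-based semi-static strategy without short selling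
whose static part costs at most `r`. -/
def Superhedge {n : ℕ} (p : Fin n → ℝ → ℝ) (P : Set (Path n)) (f : Path n → ℝ) (r : ℝ) : Prop :=
  ∃ (X : Static n) (D : Dyn n), D.Nonneg ∧ X.price p ≤ r ∧
    ∀ ω ∈ P, f ω ≤ X.putPayoff ω + D.gains ω

section Superhedge

variable {n : ℕ} {p : Fin n → ℝ → ℝ} {P : Set (Path n)} {f g : Path n → ℝ} {r s t s₀ : ℝ}

lemma Superhedge.mono (h : Superhedge p P g r) (hfg : ∀ ω ∈ P, f ω ≤ g ω) (hrs : r ≤ s) :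
    Superhedge p P f s := by
  obtain ⟨X, D, hD, hX, hg⟩ := h
  exact ⟨X, D, hD, hX.trans hrs, fun ω hω => (hfg ω hω).trans (hg ω hω)⟩

lemma Superhedge.add (hf : Superhedge p P f r) (hg : Superhedge p P g s) :
    Superhedge p P (fun ω => f ω + g ω) (r + s) := by
  obtain ⟨X, D, hD, hX, hf⟩ := hf
  obtain ⟨Y, E, hE, hY, hg⟩ := hg
  refine ⟨X + Y, D + E, hD.add hE, ?_, fun ω hω => ?_⟩
  · rw [Static.price_add]
    exact add_le_add hX hY
  · rw [Static.putPayoff_add, Dyn.gains_add]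
    linarith [hf ω hω, hg ω hω]

lemma Superhedge.const_mul (hf : Superhedge p P f r) (ht : 0 ≤ t) :
    Superhedge p P (fun ω => t * f ω) (t * r) := by
  obtain ⟨X, D, hD, hX, hf⟩ := hf
  refine ⟨t • X, t • D, hD.smul ht, ?_, fun ω hω => ?_⟩
  · rw [Static.price_smul]
    exact mul_le_mul_of_nonneg_left hX ht
  · rw [Static.putPayoff_smul, Dyn.gains_smul, ← mul_add]
    exact mul_le_mul_of_nonneg_left (hf ω hω) ht

lemma superhedge_putPayoff (X : Static n) : Superhedge p P X.putPayoff (X.price p) :=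
  ⟨X, 0, Dyn.Nonneg.zero, le_rfl, fun ω _ => by rw [Dyn.gains_zero, add_zero]⟩

lemma superhedge_const (c : ℝ) : Superhedge p P (fun _ => c) c :=
  (superhedge_putPayoff (.cash n c)).mono (fun ω _ => (Static.putPayoff_cash ω c).ge)
    (Static.price_cash p c).le

lemma superhedge_const_mul_put (c : ℝ) (i : Fin n) {K : ℝ} (hK : 0 ≤ K) :
    Superhedge p P (fun ω => c * max (K - ω i.succ) 0) (c * p i K) :=
  (superhedge_putPayoff (.puts c i hK)).mono (fun ω _ => (Static.putPayoff_puts ω c i hK).ge)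
    (Static.price_puts p c i hK).le

lemma superhedge_increment (j : Fin n) {φ : (Fin j → ℝ) → ℝ} (hφ : Measurable φ)
    (hb : ∃ C, ∀ x, |φ x| ≤ C) (h0 : ∀ x, 0 ≤ φ x) :
    Superhedge p P (fun ω => φ (restr j ω) * increment j ω) 0 := by
  refine ⟨.cash n 0, .single j φ hφ hb, .single h0, (Static.price_cash p 0).le, fun ω _ => ?_⟩
  rw [Static.putPayoff_cash, Dyn.gains_single, zero_add]

lemma superhedge_coord (hP : P ⊆ Omega n s₀) (i : Fin (n + 1)) :
    Superhedge p P (fun ω => ω i) s₀ := by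
  induction i using Fin.induction with
  | zero => exact (superhedge_const s₀).mono (fun ω hω => (hP hω).1.le) le_rfl
  | succ j ih =>
    have hold : Superhedge p P (fun ω => 1 * increment j ω) 0 :=
      superhedge_increment j measurable_const ⟨1, by simp⟩ fun _ => zero_le_one
    exact (ih.add hold).mono (fun ω _ => by simp [increment]) (add_zero s₀).le

lemma Superhedge.sum {ι : Type*} (t : Finset ι) {f : ι → Path n → ℝ} {r : ι → ℝ}
    (h : ∀ i ∈ t, Superhedge p P (f i) (r i)) :
    Superhedge p P (fun ω => ∑ i ∈ t, f i ω) (∑ i ∈ t, r i) := by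
  induction t using Finset.induction_on with
  | empty => simpa only [Finset.sum_empty] using superhedge_const 0
  | insert i t hi ih =>
    simp only [Finset.sum_insert hi]
    exact (h i (t.mem_insert_self i)).add (ih fun k hk => h k (Finset.mem_insert_of_mem hk))

lemma superhedge_norm (hP : P ⊆ Omega n s₀) :
    Superhedge p P (fun ω => ‖ω‖) ((n + 1) * s₀) := by
  refine (Superhedge.sum Finset.univ fun i _ => superhedge_coord hP i).mono (fun ω hω => ?_)
    (by simp)
  have h0 := (hP hω).2
  exact (pi_norm_le_iff_of_nonneg (Finset.sum_nonneg fun i _ => h0 i)).2 fun i =>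
    (Real.norm_of_nonneg (h0 i)).le.trans
      (Finset.single_le_sum (fun k _ => h0 k) (Finset.mem_univ i))

lemma exists_superhedge_of_le (hP : P ⊆ Omega n s₀) {C : ℝ}
    (hf : ∀ ω ∈ P, f ω ≤ C * (1 + ‖ω‖)) : ∃ r, Superhedge p P f r :=
  ⟨_, (((superhedge_const 1).add (superhedge_norm hP)).const_mul (abs_nonneg C)).mono
    (fun ω hω => (hf ω hω).trans
      (mul_le_mul_of_nonneg_right (le_abs_self C) (by positivity))) le_rfl⟩

end Superhedge

/-! ### Functionals on continuous functions of linear growth -/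

section LinearGrowth

variable {E : Type*} [NormedAddCommGroup E]

variable (E) in
/-- The continuous real functions on `E` of at most linear growth, as test functions for pricing
functionals: they include the payoffs of semi-static strategies with continuous positions. -/
def LinearGrowth : Submodule ℝ C(E, ℝ) where
  carrier := {f | ∃ C, ∀ x, |f x| ≤ C * (1 + ‖x‖)}
  zero_mem' := ⟨0, by simp⟩
  add_mem' := by
    rintro f g ⟨C, hC⟩ ⟨C', hC'⟩
    refine ⟨C + C', fun x => (abs_add_le _ _).trans ?_⟩
    rw [add_mul]
    exact add_le_add (hC x) (hC' x)
  smul_mem' := by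
    rintro c f ⟨C, hC⟩
    refine ⟨|c| * C, fun x => ?_⟩
    rw [mul_assoc]
    exact (abs_mul c (f x)).le.trans (mul_le_mul_of_nonneg_left (hC x) (abs_nonneg c))

namespace LinearGrowth

lemma mem_of_abs_le {f : C(E, ℝ)} {C : ℝ} (hf : ∀ x, |f x| ≤ C) : f ∈ LinearGrowth E := by
  refine ⟨|C|, fun x => (hf x).trans ((le_abs_self C).trans ?_)⟩
  exact le_mul_of_one_le_right (abs_nonneg C) (by linarith [norm_nonneg x])

lemma mul_mem {f g : C(E, ℝ)} {C : ℝ} (hf : ∀ x, |f x| ≤ C) (hg : g ∈ LinearGrowth E) :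
    f * g ∈ LinearGrowth E := by
  obtain ⟨B, hB⟩ := hg
  refine ⟨C * B, fun x => ?_⟩
  rw [ContinuousMap.mul_apply, abs_mul, mul_assoc]
  exact mul_le_mul (hf x) (hB x) (abs_nonneg _) ((abs_nonneg _).trans (hf x))

instance : One (LinearGrowth E) := ⟨⟨1, mem_of_abs_le (C := 1) (by simp)⟩⟩

lemma one_apply (x : E) : (1 : LinearGrowth E).1 x = 1 := rfl

/-- A Lipschitz function, as a function of linear growth. -/
def ofLipschitz (f : E → ℝ) {L : ℝ≥0} (hf : LipschitzWith L f) : LinearGrowth E where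
  val := ⟨f, hf.continuous⟩
  property := by
    refine ⟨|f 0| + L, fun x => ?_⟩
    have h := hf.dist_le_mul x 0
    rw [Real.dist_eq, dist_zero_right] at h
    have := abs_sub_abs_le_abs_sub (f x) (f 0)
    have : 0 ≤ |f 0| * ‖x‖ := by positivity
    change |f x| ≤ _
    linarith [L.coe_nonneg]

variable (E) in
/-- The norm of `E`, as a function of linear growth. -/
def normFun : LinearGrowth E := ofLipschitz norm lipschitzWith_one_norm

/-- The coordinate functions, as functions of linear growth. -/
def coord {ι : Type*} [Fintype ι] (i : ι) : LinearGrowth (ι → ℝ) :=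
  ofLipschitz (fun x => x i) (LipschitzWith.eval i)

variable (E) in
/-- The inclusion of compactly supported continuous functions. -/
def ofCompactlySupported : C_c(E, ℝ) →ₗ[ℝ] LinearGrowth E where
  toFun f := ⟨f, (f.hasCompactSupport.exists_bound_of_continuous f.continuous).elim
    fun _ => mem_of_abs_le⟩
  map_add' _ _ := rfl
  map_smul' _ _ := rfl

end LinearGrowth

/-- On `P`, the function `G` is bounded above by `C_ε + ε ‖x‖` for every `ε > 0`. This is the
growth condition under which no mass is lost when a functional is replaced by a measure. -/
def SublinearAboveOn (G : E → EReal) (P : Set E) : Prop :=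
  ∀ ε > 0, ∃ C : ℝ, ∀ x ∈ P, G x ≤ ((C + ε * ‖x‖ : ℝ) : EReal)

lemma SublinearAboveOn.of_le {f : E → ℝ} {P : Set E} {C : ℝ} (hf : ∀ x ∈ P, f x ≤ C) :
    SublinearAboveOn (fun x => (f x : EReal)) P :=
  fun ε hε => ⟨C, fun x hx => EReal.coe_le_coe_iff.2
    ((hf x hx).trans (le_add_of_nonneg_right (by positivity)))⟩

/-- The continuous cutoff function which is `1` on the ball of radius `R` and `0` outside the ball
of radius `R + 1`. -/
def cutoff [ProperSpace E] (R : ℝ) : C_c(E, ℝ) where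
  toFun x := max 0 (min 1 (R + 1 - ‖x‖))
  continuous_toFun := by fun_prop
  hasCompactSupport' := by
    refine .intro (isCompact_closedBall (0 : E) (R + 1)) fun x hx => ?_
    rw [Metric.mem_closedBall, dist_zero_right, not_le] at hx
    exact max_eq_left ((min_le_right _ _).trans (by linarith))

lemma cutoff_nonneg [ProperSpace E] (R : ℝ) (x : E) : 0 ≤ cutoff R x := le_max_left _ _

lemma cutoff_le_one [ProperSpace E] (R : ℝ) (x : E) : cutoff R x ≤ 1 :=
  max_le zero_le_one (min_le_left _ _)

lemma cutoff_eq_one [ProperSpace E] {R : ℝ} {x : E} (h : ‖x‖ ≤ R) : cutoff R x = 1 := by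
  change max 0 (min 1 (R + 1 - ‖x‖)) = 1
  rw [min_eq_left (by linarith), max_eq_right zero_le_one]

lemma one_le_cutoff_add_norm [ProperSpace E] {R : ℝ} (hR : 0 < R) (x : E) :
    1 ≤ cutoff R x + R⁻¹ * ‖x‖ := by
  obtain h | h := le_or_gt ‖x‖ R
  · rw [cutoff_eq_one h]
    exact le_add_of_nonneg_right (by positivity)
  · have : 1 ≤ R⁻¹ * ‖x‖ := by rw [inv_mul_eq_div, one_le_div hR]; exact h.le
    linarith [cutoff_nonneg R x]

variable {P : Set E} {ℓ : LinearGrowth E →ₗ[ℝ] ℝ} {f g : LinearGrowth E}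

/-- The functional `ℓ` is nonnegative on functions which are nonnegative on `P`. -/
def PositiveOn (ℓ : LinearGrowth E →ₗ[ℝ] ℝ) (P : Set E) : Prop :=
  ∀ f : LinearGrowth E, (∀ x ∈ P, 0 ≤ f.1 x) → 0 ≤ ℓ f

lemma PositiveOn.mono (hℓ : PositiveOn ℓ P) (h : ∀ x ∈ P, f.1 x ≤ g.1 x) : ℓ f ≤ ℓ g := by
  rw [← sub_nonneg, ← map_sub]
  exact hℓ _ fun x hx => sub_nonneg.2 (h x hx)

variable [MeasurableSpace E] [BorelSpace E] {Q : Measure E}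

/-- The measure `Q` integrates compactly supported continuous functions as `ℓ` does. -/
def IsRieszMeasure (Q : Measure E) (ℓ : LinearGrowth E →ₗ[ℝ] ℝ) : Prop :=
  ∀ f : C_c(E, ℝ), ∫ x, f x ∂Q = ℓ (LinearGrowth.ofCompactlySupported E f)

lemma PositiveOn.exists_regular_isRieszMeasure [ProperSpace E] (hℓ : PositiveOn ℓ P) :
    ∃ Q : Measure E, Q.Regular ∧ IsRieszMeasure Q ℓ := by
  let Λ : C_c(E, ℝ) →ₚ[ℝ] ℝ :=
    .mk₀ (ℓ ∘ₗ LinearGrowth.ofCompactlySupported E) fun f hf => hℓ _ fun x _ => hf x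
  exact ⟨RealRMK.rieszMeasure Λ, RealRMK.regular_rieszMeasure Λ,
    fun f => RealRMK.integral_rieszMeasure Λ f⟩

namespace IsRieszMeasure

lemma ae_mem [ProperSpace E] [Q.Regular] (hQ : IsRieszMeasure Q ℓ) (hℓ : PositiveOn ℓ P)
    (hP : IsClosed P) : ∀ᵐ x ∂Q, x ∈ P := by
  change Q Pᶜ = 0
  rw [hP.isOpen_compl.measure_eq_iSup_isCompact]
  simp only [ENNReal.iSup_eq_zero]
  intro K hKP hK
  obtain ⟨f, hfK, hfc, hft, hf01⟩ :=
    exists_continuousMap_one_of_isCompact_subset_isOpen hK hP.isOpen_compl hKP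
  let F : C_c(E, ℝ) := ⟨f, hfc⟩
  have hF0 : ∀ x ∈ P, F x = 0 := fun x hx =>
    image_eq_zero_of_notMem_tsupport fun h => hft h hx
  have hF : ∫ x, F x ∂Q = 0 := by
    rw [hQ, ← map_zero ℓ]
    exact le_antisymm (hℓ.mono fun x hx => (hF0 x hx).le) (hℓ.mono fun x hx => (hF0 x hx).ge)
  have hae : (F : E → ℝ) =ᵐ[Q] 0 :=
    (integral_eq_zero_iff_of_nonneg (fun x => (hf01 x).1) F.integrable).1 hF
  exact measure_mono_null (fun x hx (h : F x = 0) => one_ne_zero ((hfK hx).symm.trans h)) hae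

variable [ProperSpace E] [IsFiniteMeasureOnCompacts Q]

lemma lintegral_le (hQ : IsRieszMeasure Q ℓ) (hℓ : PositiveOn ℓ P) (hPQ : ∀ᵐ x ∂Q, x ∈ P)
    (hf : ∀ x ∈ P, 0 ≤ f.1 x) : ∫⁻ x, ENNReal.ofReal (f.1 x) ∂Q ≤ ENNReal.ofReal (ℓ f) := by
  have truncated_le (k : ℕ) :
      ∫⁻ x, ENNReal.ofReal (f.1 x * cutoff k x) ∂Q ≤ ENNReal.ofReal (ℓ f) := by
    let F : C_c(E, ℝ) := f.1 • cutoff k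
    have hF : 0 ≤ᵐ[Q] F := hPQ.mono fun x hx => mul_nonneg (hf x hx) (cutoff_nonneg _ x)
    refine (ofReal_integral_eq_lintegral_ofReal F.integrable hF).symm.trans_le ?_
    rw [hQ]
    exact ENNReal.ofReal_le_ofReal
      (hℓ.mono fun x hx => mul_le_of_le_one_right (hf x hx) (cutoff_le_one _ x))
  have hlim (x : E) : Tendsto (fun k : ℕ => ENNReal.ofReal (f.1 x * cutoff k x)) atTop
      (𝓝 (ENNReal.ofReal (f.1 x))) := by
    refine tendsto_const_nhds.congr' ?_
    filter_upwards [(tendsto_natCast_atTop_atTop (R := ℝ)).eventually_ge_atTop ‖x‖] with k hk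
    rw [cutoff_eq_one hk, mul_one]
  calc ∫⁻ x, ENNReal.ofReal (f.1 x) ∂Q
      = ∫⁻ x, liminf (fun k : ℕ => ENNReal.ofReal (f.1 x * cutoff k x)) atTop ∂Q := by
        simp only [(hlim _).liminf_eq]
    _ ≤ liminf (fun k : ℕ => ∫⁻ x, ENNReal.ofReal (f.1 x * cutoff k x) ∂Q) atTop :=
        lintegral_liminf_le fun k =>
          (ENNReal.continuous_ofReal.comp (f.1.continuous.mul (cutoff k).continuous)).measurable
    _ ≤ ENNReal.ofReal (ℓ f) := liminf_le_of_frequently_le' (.of_forall truncated_le)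

lemma integral_le (hQ : IsRieszMeasure Q ℓ) (hℓ : PositiveOn ℓ P) (hPQ : ∀ᵐ x ∂Q, x ∈ P)
    (hf : ∀ x ∈ P, 0 ≤ f.1 x) : ∫ x, f.1 x ∂Q ≤ ℓ f := by
  rw [integral_eq_lintegral_of_nonneg_ae (hPQ.mono hf) f.1.continuous.aestronglyMeasurable]
  exact ENNReal.toReal_le_of_le_ofReal (hℓ f hf) (hQ.lintegral_le hℓ hPQ hf)

lemma integrable (hQ : IsRieszMeasure Q ℓ) (hℓ : PositiveOn ℓ P) (hPQ : ∀ᵐ x ∂Q, x ∈ P)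
    (f : LinearGrowth E) : Integrable f.1 Q := by
  obtain ⟨C, hC⟩ := f.2
  have hnonneg : ∀ x ∈ P, 0 ≤ (1 + LinearGrowth.normFun E : LinearGrowth E).1 x := fun x _ =>
    add_nonneg zero_le_one (norm_nonneg x)
  have hint : Integrable (1 + LinearGrowth.normFun E : LinearGrowth E).1 Q := by
    refine ⟨(1 + LinearGrowth.normFun E : LinearGrowth E).1.continuous.aestronglyMeasurable, ?_⟩
    rw [hasFiniteIntegral_iff_ofReal (hPQ.mono hnonneg)]
    exact (hQ.lintegral_le hℓ hPQ hnonneg).trans_lt ENNReal.ofReal_lt_top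
  exact (hint.const_mul C).mono' f.1.continuous.aestronglyMeasurable (.of_forall hC)

lemma isFiniteMeasure (hQ : IsRieszMeasure Q ℓ) (hℓ : PositiveOn ℓ P) (hPQ : ∀ᵐ x ∂Q, x ∈ P) :
    IsFiniteMeasure Q :=
  (integrable_const_iff.1 (hQ.integrable hℓ hPQ 1)).resolve_left one_ne_zero

/-- Mass cannot escape to infinity because `1 ≤ cutoff R + ‖·‖ / R`, where `ℓ ‖·‖ / R → 0`. -/
lemma isProbabilityMeasure (hQ : IsRieszMeasure Q ℓ) (hℓ : PositiveOn ℓ P)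
    (hPQ : ∀ᵐ x ∂Q, x ∈ P) (hone : ℓ 1 = 1) : IsProbabilityMeasure Q := by
  have := hQ.isFiniteMeasure hℓ hPQ
  have mass_le : Q.real univ ≤ 1 := by
    have h := hQ.integral_le hℓ hPQ (f := 1) fun _ _ => zero_le_one
    simpa only [LinearGrowth.one_apply, integral_const, smul_eq_mul, mul_one, hone] using h
  have le_mass (R : ℝ) (hR : 0 < R) : 1 ≤ Q.real univ + R⁻¹ * ℓ (LinearGrowth.normFun E) := by
    calc (1 : ℝ) = ℓ 1 := hone.symm
      _ ≤ ℓ (LinearGrowth.ofCompactlySupported E (cutoff R) + R⁻¹ • LinearGrowth.normFun E) :=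
          hℓ.mono fun x _ => one_le_cutoff_add_norm hR x
      _ = ∫ x, cutoff R x ∂Q + R⁻¹ * ℓ (LinearGrowth.normFun E) := by
          rw [map_add, map_smul, ← hQ, smul_eq_mul]
      _ ≤ ∫ _, 1 ∂Q + R⁻¹ * ℓ (LinearGrowth.normFun E) := by
          gcongr
          exacts [(cutoff R).integrable, integrable_const 1, fun x => cutoff_le_one R x]
      _ = Q.real univ + R⁻¹ * ℓ (LinearGrowth.normFun E) := by simp
  have hlim : Tendsto (fun R : ℝ => Q.real univ + R⁻¹ * ℓ (LinearGrowth.normFun E)) atTop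
      (𝓝 (Q.real univ)) := by
    simpa using
      (tendsto_inv_atTop_zero.mul_const (ℓ (LinearGrowth.normFun E))).const_add (Q.real univ)
  have le_mass' : 1 ≤ Q.real univ :=
    ge_of_tendsto hlim ((eventually_gt_atTop 0).mono le_mass)
  exact isProbabilityMeasure_iff_real.2 (mass_le.antisymm le_mass')

lemma le_integral (hQ : IsRieszMeasure Q ℓ) (hℓ : PositiveOn ℓ P)
    (hPQ : ∀ᵐ x ∂Q, x ∈ P) (hone : ℓ 1 = 1)
    (hf : SublinearAboveOn (fun x => (f.1 x : EReal)) P) : ℓ f ≤ ∫ x, f.1 x ∂Q := by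
  have := hQ.isProbabilityMeasure hℓ hPQ hone
  have le_add (ε : ℝ) (hε : 0 < ε) : ℓ f ≤ ∫ x, f.1 x ∂Q + ε * ℓ (LinearGrowth.normFun E) := by
    obtain ⟨C, hC⟩ := hf ε hε
    have hgap := hQ.integral_le hℓ hPQ (f := C • 1 + ε • LinearGrowth.normFun E - f) fun x hx => by
      have h := EReal.coe_le_coe_iff.1 (hC x hx)
      change 0 ≤ C * 1 + ε * ‖x‖ - f.1 x
      linarith
    have hsplit : ∫ x, (C • 1 + ε • LinearGrowth.normFun E - f : LinearGrowth E).1 x ∂Q =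
        C + ε * ∫ x, ‖x‖ ∂Q - ∫ x, f.1 x ∂Q := by
      have hnorm : Integrable (fun x : E => ε * ‖x‖) Q :=
        (hQ.integrable hℓ hPQ (LinearGrowth.normFun E)).const_mul ε
      have haffine : Integrable (fun x : E => C * 1 + ε * ‖x‖) Q := (integrable_const _).add hnorm
      change ∫ x, (C * 1 + ε * ‖x‖ - f.1 x) ∂Q = _
      rw [integral_sub haffine (hQ.integrable hℓ hPQ f), integral_add (integrable_const _) hnorm,
        integral_const_mul ε]
      simp
    have hnorm : 0 ≤ ε * ∫ x, ‖x‖ ∂Q := by positivity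
    simp only [map_sub, map_add, map_smul, hone, smul_eq_mul] at hgap
    linarith
  have hlim : Tendsto (fun ε => ∫ x, f.1 x ∂Q + ε * ℓ (LinearGrowth.normFun E)) (𝓝[>] 0)
      (𝓝 (∫ x, f.1 x ∂Q)) :=
    tendsto_nhdsWithin_of_tendsto_nhds (by
      simpa using ((continuous_mul_const (ℓ (LinearGrowth.normFun E))).const_add _).tendsto 0)
  exact ge_of_tendsto hlim (eventually_mem_nhdsWithin.mono le_add)

end IsRieszMeasure

theorem PositiveOn.exists_measure [ProperSpace E] (hℓ : PositiveOn ℓ P) (hP : IsClosed P)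
    (hone : ℓ 1 = 1) :
    ∃ Q : Measure E, IsProbabilityMeasure Q ∧ (∀ᵐ x ∂Q, x ∈ P) ∧
      (∀ f : LinearGrowth E, Integrable f.1 Q) ∧
      ∀ f : LinearGrowth E, SublinearAboveOn (fun x => (f.1 x : EReal)) P →
        ℓ f ≤ ∫ x, f.1 x ∂Q := by
  obtain ⟨Q, hreg, hQ⟩ := hℓ.exists_regular_isRieszMeasure
  have hPQ := hQ.ae_mem hℓ hP
  exact ⟨Q, hQ.isProbabilityMeasure hℓ hPQ hone, hPQ, hQ.integrable hℓ hPQ,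
    fun f hf => hQ.le_integral hℓ hPQ hone hf⟩

end LinearGrowth

/-! ### Pricing functionals -/

/-- A case of the M. Riesz extension theorem: extend `c • e ↦ c` from the line through `e`. -/
lemma exists_linearMap_nonneg_of_cone {E : Type*} [AddCommGroup E] [Module ℝ E]
    (K : PointedCone ℝ E) {e : E} (hpos : ∀ c : ℝ, c • e ∈ K → 0 ≤ c)
    (habs : ∀ x, ∃ c : ℝ, c • e + x ∈ K) :
    ∃ ℓ : E →ₗ[ℝ] ℝ, ℓ e = 1 ∧ ∀ x ∈ K, 0 ≤ ℓ x := by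
  have he : e ≠ 0 := by
    rintro rfl
    linarith [hpos (-1) (by simp)]
  let φ : E →ₗ.[ℝ] ℝ := LinearPMap.mkSpanSingleton e 1 he
  have hφ (c : ℝ) (h : c • e ∈ φ.domain) : φ ⟨c • e, h⟩ = c :=
    (LinearPMap.mkSpanSingleton'_apply e 1 _ c h).trans (mul_one c)
  have hmem (c : ℝ) : c • e ∈ φ.domain := Submodule.mem_span_singleton.2 ⟨c, rfl⟩
  obtain ⟨ℓ, hℓφ, hℓK⟩ := riesz_extension K φ
    (by
      rintro ⟨x, hx⟩ hxK
      obtain ⟨c, rfl⟩ := Submodule.mem_span_singleton.1 hx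
      exact (hpos c hxK).trans_eq (hφ c hx).symm)
    (fun x => (habs x).imp' (fun c => ⟨c • e, hmem c⟩) fun _ => id)
  exact ⟨ℓ, by simpa only [one_smul] using (hℓφ ⟨_, hmem 1⟩).trans (hφ 1 (hmem 1)), hℓK⟩

section Pricing

variable {n : ℕ} {p : Fin n → ℝ → ℝ} {P : Set (Path n)} {G : Path n → EReal} {v s₀ : ℝ}
  {ℓ : LinearGrowth (Path n) →ₗ[ℝ] ℝ}

/-- The linear functional `ℓ` is dominated by the superhedging price. -/
def IsPricing (p : Fin n → ℝ → ℝ) (P : Set (Path n)) (ℓ : LinearGrowth (Path n) →ₗ[ℝ] ℝ) : Prop :=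
  ∀ f r, Superhedge p P f.1 r → ℓ f ≤ r

lemma IsPricing.positiveOn (hℓ : IsPricing p P ℓ) : PositiveOn ℓ P := fun f hf => by
  have h := hℓ (-f) 0 ((superhedge_const 0).mono (fun ω hω => neg_nonpos.2 (hf ω hω)) le_rfl)
  rwa [map_neg, neg_nonpos] at h

lemma IsPricing.map_one (hℓ : IsPricing p P ℓ) : ℓ 1 = 1 := by
  have h := hℓ (-1) (-1) (superhedge_const (-1))
  rw [map_neg, neg_le_neg_iff] at h
  exact (hℓ 1 1 (superhedge_const 1)).antisymm h

/-- The claims `h` such that, for some `t ≥ 0`, a superhedge of `t G` at price `t v` is obtained by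
adding the claim `h` to a semi-static strategy. A pricing functional which values `G` at least at
`v` is a normalized linear functional which is nonnegative on this cone. -/
def acceptanceCone (p : Fin n → ℝ → ℝ) (P : Set (Path n)) (G : Path n → EReal) (v : ℝ)
    (hG : ∃ a : Path n → ℝ, ∀ ω ∈ P, G ω ≤ a ω) : PointedCone ℝ (LinearGrowth (Path n)) where
  carrier := {h | ∃ t ≥ 0, ∃ a : Path n → ℝ, (∀ ω ∈ P, G ω ≤ a ω) ∧
    Superhedge p P (fun ω => t * a ω - h.1 ω) (t * v)}
  zero_mem' := by
    obtain ⟨a, ha⟩ := hG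
    exact ⟨0, le_rfl, a, ha, (superhedge_const 0).mono
      (fun ω _ => by change 0 * a ω - 0 ≤ 0; simp) (zero_mul v).ge⟩
  add_mem' := by
    rintro h h' ⟨t, ht, a, ha, hedge⟩ ⟨t', ht', a', ha', hedge'⟩
    refine ⟨t + t', add_nonneg ht ht', fun ω => min (a ω) (a' ω), fun ω hω => ?_,
      (hedge.add hedge').mono (fun ω _ => ?_) (add_mul t t' v).ge⟩
    · rw [EReal.coe_strictMono.monotone.map_min]
      exact le_min (ha ω hω) (ha' ω hω)
    · change (t + t') * min (a ω) (a' ω) - (h.1 ω + h'.1 ω) ≤ _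
      linarith [mul_le_mul_of_nonneg_left (min_le_left (a ω) (a' ω)) ht,
        mul_le_mul_of_nonneg_left (min_le_right (a ω) (a' ω)) ht']
  smul_mem' := by
    rintro ⟨c, hc⟩ h ⟨t, ht, a, ha, hedge⟩
    refine ⟨c * t, mul_nonneg hc ht, a, ha,
      (hedge.const_mul hc).mono (fun ω _ => ?_) (mul_assoc c t v).ge⟩
    change c * t * a ω - c * h.1 ω ≤ _
    linarith

/-- A negative constant in the cone would lower the price of `G` below `v`: directly if `t > 0`,
and by adding arbitrarily many copies to a superhedge of `G` if `t = 0`. -/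
lemma nonneg_of_const_mem_acceptanceCone {a₀ : Path n → ℝ} {r₀ : ℝ} (ha₀ : ∀ ω ∈ P, G ω ≤ a₀ ω)
    (hedge₀ : Superhedge p P a₀ r₀)
    (hv : ∀ (a : Path n → ℝ) r, (∀ ω ∈ P, G ω ≤ a ω) → Superhedge p P a r → v ≤ r) {c : ℝ}
    (hc : c • (1 : LinearGrowth (Path n)) ∈ acceptanceCone p P G v ⟨a₀, ha₀⟩) : 0 ≤ c := by
  obtain ⟨t, ht, a, ha, hedge⟩ := hc
  replace hedge : Superhedge p P (fun ω => t * a ω) (t * v + c) :=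
    (hedge.add (superhedge_const c)).mono
      (fun ω _ => by change _ ≤ t * a ω - c * 1 + c; linarith) le_rfl
  obtain rfl | ht := ht.eq_or_lt
  · by_contra! hc
    have hcheap := hv a₀ (r₀ + (r₀ - v + 1) / -c * (0 * v + c)) ha₀ <|
      (hedge₀.add (hedge.const_mul (t := (r₀ - v + 1) / -c) (by
        have := hv a₀ r₀ ha₀ hedge₀
        exact div_nonneg (by linarith) (by linarith)))).mono (fun ω _ => by simp) le_rfl
    have : (r₀ - v + 1) / -c * (0 * v + c) = -(r₀ - v + 1) := by
      field_simp [hc.ne]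
      ring
    linarith
  · have hprice := hv a (t⁻¹ * (t * v + c)) ha <| (hedge.const_mul (inv_nonneg.2 ht.le)).mono
      (fun ω _ => (inv_mul_cancel_left₀ ht.ne' (a ω)).ge) le_rfl
    rw [mul_add, inv_mul_cancel_left₀ ht.ne', le_add_iff_nonneg_right] at hprice
    exact nonneg_of_mul_nonneg_right hprice (inv_pos.2 ht)

theorem exists_isPricing (hP : P ⊆ Omega n s₀) (hG : SublinearAboveOn G P)
    (hv : ∀ (a : Path n → ℝ) r, (∀ ω ∈ P, G ω ≤ a ω) → Superhedge p P a r → v ≤ r) :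
    ∃ ℓ, IsPricing p P ℓ ∧ ∀ f : LinearGrowth (Path n), (∀ ω ∈ P, G ω ≤ f.1 ω) → v ≤ ℓ f := by
  obtain ⟨C, ha₀⟩ := hG 1 one_pos
  have hedge₀ := (superhedge_const (p := p) C).add ((superhedge_norm hP).const_mul zero_le_one)
  let K := acceptanceCone p P G v ⟨_, ha₀⟩
  have sub_mem {f : LinearGrowth (Path n)} {r : ℝ} (hf : Superhedge p P f.1 r) :
      r • 1 - f ∈ K :=
    ⟨0, le_rfl, _, ha₀, (hf.add (superhedge_const (-r))).mono
      (fun ω _ => by change 0 * _ - (r * 1 - f.1 ω) ≤ f.1 ω + -r; linarith) (by simp)⟩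
  have absorbing (f : LinearGrowth (Path n)) : ∃ r : ℝ, r • 1 + f ∈ K := by
    obtain ⟨B, hB⟩ := f.2
    obtain ⟨r, hr⟩ := exists_superhedge_of_le (p := p) hP (f := (-f).1) (C := B)
      fun ω _ => (neg_le_abs _).trans (hB ω)
    exact ⟨r, by simpa only [sub_neg_eq_add] using sub_mem hr⟩
  obtain ⟨ℓ, hℓ1, hℓK⟩ := exists_linearMap_nonneg_of_cone K
    (fun _ => nonneg_of_const_mem_acceptanceCone ha₀ hedge₀ hv) absorbing
  refine ⟨ℓ, fun f r hf => ?_, fun f hf => ?_⟩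
  · simpa [hℓ1] using hℓK _ (sub_mem hf)
  · have mem : f - v • 1 ∈ K := ⟨1, zero_le_one, f.1, hf, (superhedge_const v).mono
      (fun ω _ => by change 1 * f.1 ω - (f.1 ω - v * 1) ≤ v; linarith) (one_mul v).ge⟩
    simpa [hℓ1] using hℓK _ mem

end Pricing

/-! ### Put prices determine the marginals -/

section Puts

variable {ν ν' : Measure ℝ}

lemma integrable_put [IsFiniteMeasure ν] (h0 : ∀ᵐ x ∂ν, 0 ≤ x) (K : ℝ) :
    Integrable (fun x => max (K - x) 0) ν := by
  refine (integrable_const |K|).mono' (by fun_prop) (h0.mono fun x hx => ?_)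
  rw [Real.norm_of_nonneg (le_max_right _ _)]
  exact max_le (by linarith [le_abs_self K]) (abs_nonneg K)

lemma integral_put_eq_zero (h0 : ∀ᵐ x ∂ν, 0 ≤ x) {K : ℝ} (hK : K ≤ 0) :
    ∫ x, max (K - x) 0 ∂ν = 0 :=
  integral_eq_zero_of_ae (h0.mono fun _ hx => max_eq_right (by linarith))

lemma mul_measureReal_Iic_le_integral_put_sub [IsFiniteMeasure ν]
    (hν : ∀ K, Integrable (fun x => max (K - x) 0) ν) (K : ℝ) {h : ℝ} (hh : 0 ≤ h) :
    h * ν.real (Iic K) ≤ ∫ x, max (K + h - x) 0 ∂ν - ∫ x, max (K - x) 0 ∂ν := by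
  rw [← integral_sub (hν _) (hν _), mul_comm, ← smul_eq_mul,
    ← integral_indicator_const _ measurableSet_Iic]
  refine integral_mono ((integrable_const h).indicator measurableSet_Iic) ((hν _).sub (hν _))
    fun x => ?_
  by_cases hx : x ≤ K
  · simp only [indicator_of_mem (mem_Iic.2 hx)]
    rw [max_eq_left (by linarith), max_eq_left (by linarith)]
    linarith
  · simp only [indicator_of_notMem (mt mem_Iic.1 hx)]
    exact sub_nonneg.2 (max_le_max_right _ (by linarith))

lemma integral_put_sub_le_mul_measureReal_Iic [IsFiniteMeasure ν]
    (hν : ∀ K, Integrable (fun x => max (K - x) 0) ν) (K : ℝ) {h : ℝ} (hh : 0 ≤ h) :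
    ∫ x, max (K + h - x) 0 ∂ν - ∫ x, max (K - x) 0 ∂ν ≤ h * ν.real (Iic (K + h)) := by
  rw [← integral_sub (hν _) (hν _), mul_comm, ← smul_eq_mul,
    ← integral_indicator_const _ measurableSet_Iic]
  refine integral_mono ((hν _).sub (hν _)) ((integrable_const h).indicator measurableSet_Iic)
    fun x => ?_
  by_cases hx : x ≤ K + h
  · simp only [indicator_of_mem (mem_Iic.2 hx)]
    rw [max_eq_left (by linarith)]
    linarith [le_max_left (K - x) 0]
  · simp only [indicator_of_notMem (mt mem_Iic.1 hx)]
    rw [max_eq_right (by linarith), max_eq_right (by linarith), sub_zero]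

open ProbabilityTheory in
lemma cdf_le_of_integral_put_eq [IsProbabilityMeasure ν] [IsProbabilityMeasure ν']
    (hν : ∀ K, Integrable (fun x => max (K - x) 0) ν)
    (hν' : ∀ K, Integrable (fun x => max (K - x) 0) ν')
    (h : ∀ K, ∫ x, max (K - x) 0 ∂ν = ∫ x, max (K - x) 0 ∂ν') (K : ℝ) :
    cdf ν K ≤ cdf ν' K := by
  have hlim : Tendsto (cdf ν') (𝓝[>] K) (𝓝 (cdf ν' K)) :=
    ((cdf ν').right_continuous K).mono_left (nhdsWithin_mono K Ioi_subset_Ici_self)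
  refine ge_of_tendsto hlim (eventually_mem_nhdsWithin.mono fun L (hL : K < L) => ?_)
  have hlow := mul_measureReal_Iic_le_integral_put_sub hν K (sub_nonneg.2 hL.le)
  have hup := integral_put_sub_le_mul_measureReal_Iic hν' K (sub_nonneg.2 hL.le)
  rw [h, h, add_sub_cancel] at hlow
  rw [add_sub_cancel] at hup
  rw [cdf_eq_real, cdf_eq_real]
  exact le_of_mul_le_mul_left (hlow.trans hup) (sub_pos.2 hL)

/-- The right derivative of `K ↦ ∫ (K - x)⁺ dν` is the distribution function of `ν`. -/
theorem measure_eq_of_integral_put_eq [IsProbabilityMeasure ν] [IsProbabilityMeasure ν']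
    (hν : ∀ K, Integrable (fun x => max (K - x) 0) ν)
    (hν' : ∀ K, Integrable (fun x => max (K - x) 0) ν')
    (h : ∀ K, ∫ x, max (K - x) 0 ∂ν = ∫ x, max (K - x) 0 ∂ν') : ν = ν' :=
  Measure.eq_of_cdf _ _ <| StieltjesFunction.ext fun K =>
    (cdf_le_of_integral_put_eq hν hν' h K).antisymm
      (cdf_le_of_integral_put_eq hν' hν (fun K => (h K).symm) K)

end Puts

/-! ### Test functions for supermartingales -/

section WeightedMap

variable {α β : Type*} [MeasurableSpace α] [MeasurableSpace β] {Q : Measure α} {r : α → β}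
  {Y : α → ℝ} {φ : β → ℝ}

/-- The image under `r` of the measure with density `Y⁺`. In terms of these images, the condition
`E[Y | r] ≤ 0` becomes the order of measures `weightedMap Q r Y ≤ weightedMap Q r (-Y)`. -/
def weightedMap (Q : Measure α) (r : α → β) (Y : α → ℝ) : Measure β :=
  (Q.withDensity fun ω => ENNReal.ofReal (Y ω)).map r

lemma isFiniteMeasure_weightedMap (r : α → β) (hY : Integrable Y Q) :
    IsFiniteMeasure (weightedMap Q r Y) := by
  have := isFiniteMeasure_withDensity_ofReal hY.2
  unfold weightedMap
  infer_instance

lemma lintegral_weightedMap (hr : Measurable r) (hY : Measurable Y) (hφ : Measurable φ)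
    (hφ0 : ∀ x, 0 ≤ φ x) :
    ∫⁻ x, ENNReal.ofReal (φ x) ∂(weightedMap Q r Y) =
      ∫⁻ ω, ENNReal.ofReal (φ (r ω) * Y ω) ∂Q := by
  have hφr : Measurable fun ω => ENNReal.ofReal (φ (r ω)) := (hφ.comp hr).ennreal_ofReal
  rw [weightedMap, lintegral_map hφ.ennreal_ofReal hr,
    lintegral_withDensity_eq_lintegral_mul _ hY.ennreal_ofReal hφr]
  refine lintegral_congr fun ω => ?_
  rw [Pi.mul_apply, ENNReal.ofReal_mul (hφ0 _), mul_comm]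

lemma integrable_bounded_comp_mul (hr : Measurable r) (hYi : Integrable Y Q) (hφ : Measurable φ)
    (hφ0 : ∀ x, 0 ≤ φ x) {C : ℝ} (hφC : ∀ x, φ x ≤ C) :
    Integrable (fun ω => φ (r ω) * Y ω) Q :=
  hYi.bdd_mul (c := C) (hφ.comp hr).aestronglyMeasurable
    (.of_forall fun _ => (Real.norm_of_nonneg (hφ0 _)).trans_le (hφC _))

lemma integral_comp_mul_nonpos_iff (hr : Measurable r) (hY : Measurable Y) (hYi : Integrable Y Q)
    (hφ : Measurable φ) (hφ0 : ∀ x, 0 ≤ φ x) {C : ℝ} (hφC : ∀ x, φ x ≤ C) :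
    ∫ ω, φ (r ω) * Y ω ∂Q ≤ 0 ↔
      ∫⁻ x, ENNReal.ofReal (φ x) ∂(weightedMap Q r Y) ≤
        ∫⁻ x, ENNReal.ofReal (φ x) ∂(weightedMap Q r (-Y)) := by
  have hi := integrable_bounded_comp_mul hr hYi hφ hφ0 hφC
  have hi' : ∫⁻ ω, ENNReal.ofReal (-(φ (r ω) * Y ω)) ∂Q ≠ ⊤ := hi.neg.lintegral_lt_top.ne
  simp only [lintegral_weightedMap hr hY hφ hφ0, lintegral_weightedMap hr hY.neg hφ hφ0,
    Pi.neg_apply, mul_neg]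
  rw [integral_eq_lintegral_pos_part_sub_lintegral_neg_part hi, sub_nonpos,
    ENNReal.toReal_le_toReal hi.lintegral_lt_top.ne hi']

lemma forall_integral_indicator_mul_nonpos_iff (hr : Measurable r) (hY : Measurable Y)
    (hYi : Integrable Y Q) :
    (∀ A, MeasurableSet A → ∫ ω, A.indicator (fun _ => (1 : ℝ)) (r ω) * Y ω ∂Q ≤ 0) ↔
      weightedMap Q r Y ≤ weightedMap Q r (-Y) := by
  rw [Measure.le_iff]
  refine forall₂_congr fun A hA => ?_
  have hofReal (x : β) : ENNReal.ofReal (A.indicator (fun _ => (1 : ℝ)) x) = A.indicator 1 x := by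
    by_cases hx : x ∈ A <;> simp [hx]
  rw [integral_comp_mul_nonpos_iff hr hY hYi (measurable_const.indicator hA)
    (indicator_nonneg fun _ _ => zero_le_one) (indicator_le_self' fun _ _ => zero_le_one)]
  simp only [hofReal, lintegral_indicator_one hA]

end WeightedMap

lemma measure_le_of_forall_lintegral_compactlySupported_le {X : Type*} [TopologicalSpace X]
    [T2Space X] [LocallyCompactSpace X] [MeasurableSpace X] [BorelSpace X] {ν ν' : Measure X}
    [ν.Regular] [ν'.Regular] [IsFiniteMeasure ν]
    (h : ∀ f : C_c(X, ℝ), (∀ x, f x ∈ Icc 0 1) →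
      ∫⁻ x, ENNReal.ofReal (f x) ∂ν ≤ ∫⁻ x, ENNReal.ofReal (f x) ∂ν') : ν ≤ ν' := by
  have compact_le_open (K U : Set X) (hK : IsCompact K) (hU : IsOpen U) (hKU : K ⊆ U) :
      ν K ≤ ν' U := by
    obtain ⟨f, hfK, hfc, hfU, hf01⟩ :=
      exists_continuousMap_one_of_isCompact_subset_isOpen hK hU hKU
    have indicator_le (x : X) : K.indicator 1 x ≤ ENNReal.ofReal (f x) :=
      indicator_apply_le' (fun hx => by simp [hfK hx]) fun _ => zero_le
    have le_indicator (x : X) : ENNReal.ofReal (f x) ≤ U.indicator 1 x := by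
      by_cases hx : x ∈ U
      · simpa [hx] using (hf01 x).2
      · simp [image_eq_zero_of_notMem_tsupport fun hx' => hx (hfU hx')]
    calc ν K = ∫⁻ x, K.indicator 1 x ∂ν := (lintegral_indicator_one hK.measurableSet).symm
      _ ≤ ∫⁻ x, ENNReal.ofReal (f x) ∂ν := lintegral_mono indicator_le
      _ ≤ ∫⁻ x, ENNReal.ofReal (f x) ∂ν' := h ⟨f, hfc⟩ hf01
      _ ≤ ∫⁻ x, U.indicator 1 x ∂ν' := lintegral_mono le_indicator
      _ = ν' U := lintegral_indicator_one hU.measurableSet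
  refine Measure.le_iff.2 fun A hA => ?_
  rw [hA.measure_eq_iSup_isCompact_of_ne_top (measure_ne_top ν A)]
  refine iSup₂_le fun K hKA => iSup_le fun hK => le_trans ?_ (measure_mono hKA)
  rw [K.measure_eq_iInf_isOpen ν']
  exact le_iInf₂ fun U hKU => le_iInf fun hU => compact_le_open K U hK hU hKU

section Supermartingale

variable {n : ℕ} {Q : Measure (Path n)}

lemma continuous_restr (j : Fin n) : Continuous (restr j : Path n → Fin j → ℝ) := by
  unfold restr
  fun_prop

lemma measurable_increment (j : Fin n) : Measurable (increment j) := by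
  unfold increment
  fun_prop

lemma integrable_increment (hQ : ∀ i, Integrable (fun ω : Path n => ω i) Q) (j : Fin n) :
    Integrable (increment j) Q :=
  (hQ _).sub (hQ _)

lemma isSupermartingaleLaw_iff (hQ : ∀ i, Integrable (fun ω : Path n => ω i) Q) :
    IsSupermartingaleLaw Q ↔ ∀ j : Fin n,
      weightedMap Q (restr j) (increment j) ≤ weightedMap Q (restr j) (-increment j) :=
  forall_congr' fun j => forall_integral_indicator_mul_nonpos_iff
    (continuous_restr j).measurable (measurable_increment j) (integrable_increment hQ j)

lemma IsSupermartingaleLaw.integral_mul_increment_nonpos (h : IsSupermartingaleLaw Q)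
    (hQ : ∀ i, Integrable (fun ω : Path n => ω i) Q) (j : Fin n) {φ : (Fin j → ℝ) → ℝ}
    (hφ : Measurable φ) (hφ0 : ∀ x, 0 ≤ φ x) {C : ℝ} (hφC : ∀ x, φ x ≤ C) :
    ∫ ω, φ (restr j ω) * increment j ω ∂Q ≤ 0 :=
  (integral_comp_mul_nonpos_iff (continuous_restr j).measurable (measurable_increment j)
    (integrable_increment hQ j) hφ hφ0 hφC).2
    (lintegral_mono' ((isSupermartingaleLaw_iff hQ).1 h j) le_rfl)

lemma isSupermartingaleLaw_of_compactlySupported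
    (hQ : ∀ i, Integrable (fun ω : Path n => ω i) Q)
    (h : ∀ (j : Fin n) (φ : C_c(Fin j → ℝ, ℝ)), (∀ x, φ x ∈ Icc 0 1) →
      ∫ ω, φ (restr j ω) * increment j ω ∂Q ≤ 0) : IsSupermartingaleLaw Q := by
  refine (isSupermartingaleLaw_iff hQ).2 fun j => ?_
  have := isFiniteMeasure_weightedMap (restr j) (integrable_increment hQ j)
  have := isFiniteMeasure_weightedMap (restr j) (integrable_increment hQ j).neg
  refine measure_le_of_forall_lintegral_compactlySupported_le fun φ hφ => ?_
  exact (integral_comp_mul_nonpos_iff (continuous_restr j).measurable (measurable_increment j)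
    (integrable_increment hQ j) φ.continuous.measurable (fun x => (hφ x).1)
    fun x => (hφ x).2).1 (h j φ hφ)

end Supermartingale

/-! ### Expectations in the extended reals -/

section Expectation

variable {n : ℕ} {Q : Measure (Path n)} {G H : Path n → EReal} {f : ℕ → Path n → ℝ} {F : Path n → ℝ}

lemma eexpE_coe (hF : Integrable F Q) : eexpE Q (fun ω => (F ω : EReal)) = (∫ ω, F ω ∂Q : ℝ) := by
  have hneg : ∫⁻ ω, ENNReal.ofReal (-F ω) ∂Q ≠ ⊤ := hF.neg.lintegral_lt_top.ne
  rw [integral_eq_lintegral_pos_part_sub_lintegral_neg_part hF, EReal.coe_sub,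
    EReal.coe_ennreal_toReal hF.lintegral_lt_top.ne, EReal.coe_ennreal_toReal hneg]
  rfl

lemma eexpE_mono (h : ∀ᵐ ω ∂Q, G ω ≤ H ω) : eexpE Q G ≤ eexpE Q H := by
  refine EReal.sub_le_sub ?_ ?_ <;> rw [EReal.coe_ennreal_le_coe_ennreal_iff] <;>
    refine lintegral_mono_ae (h.mono fun ω hω => EReal.toENNReal_le_toENNReal ?_)
  exacts [hω, EReal.neg_le_neg_iff.2 hω]

lemma tendsto_lintegral_posE (hF : Integrable F Q) (hf : ∀ k, Integrable (f k) Q)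
    (hfF : ∀ k, ∀ᵐ ω ∂Q, f k ω ≤ F ω)
    (hlim : ∀ᵐ ω ∂Q, Tendsto (fun k => (f k ω : EReal)) atTop (𝓝 (G ω))) :
    Tendsto (fun k => ∫⁻ ω, ENNReal.ofReal (f k ω) ∂Q) atTop (𝓝 (∫⁻ ω, posE (G ω) ∂Q)) :=
  tendsto_lintegral_of_dominated_convergence' (fun ω => ENNReal.ofReal (F ω))
    (fun k => (hf k).1.aemeasurable.ennreal_ofReal)
    (fun k => (hfF k).mono fun _ => ENNReal.ofReal_le_ofReal) hF.lintegral_lt_top.ne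
    (hlim.mono fun _ => (EReal.continuous_toENNReal.tendsto _).comp)

lemma lintegral_posE_neg_le_liminf (hf : ∀ k, Integrable (f k) Q)
    (hlim : ∀ᵐ ω ∂Q, Tendsto (fun k => (f k ω : EReal)) atTop (𝓝 (G ω))) :
    ∫⁻ ω, posE (-G ω) ∂Q ≤ liminf (fun k => ∫⁻ ω, ENNReal.ofReal (-f k ω) ∂Q) atTop := by
  refine (lintegral_mono_ae (hlim.mono fun ω h => ?_)).trans
    (lintegral_liminf_le' fun k => (hf k).1.aemeasurable.neg.ennreal_ofReal)
  exact (((EReal.continuous_toENNReal.comp continuous_neg).tendsto _).comp h).liminf_eq.ge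

lemma lintegral_ofReal_neg_add_le (hF : Integrable F Q) {v : ℝ} (hv : v ≤ ∫ ω, F ω ∂Q) :
    ∫⁻ ω, ENNReal.ofReal (-F ω) ∂Q ≤
      ENNReal.ofReal ((∫⁻ ω, ENNReal.ofReal (F ω) ∂Q).toReal - v) := by
  have hneg : ∫⁻ ω, ENNReal.ofReal (-F ω) ∂Q ≠ ⊤ := hF.neg.lintegral_lt_top.ne
  rw [integral_eq_lintegral_pos_part_sub_lintegral_neg_part hF] at hv
  rw [← ENNReal.ofReal_toReal hneg]
  exact ENNReal.ofReal_le_ofReal (by linarith)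

theorem le_eexpE_of_tendsto (hF : Integrable F Q) (hf : ∀ k, Integrable (f k) Q)
    (hfF : ∀ k, ∀ᵐ ω ∂Q, f k ω ≤ F ω)
    (hlim : ∀ᵐ ω ∂Q, Tendsto (fun k => (f k ω : EReal)) atTop (𝓝 (G ω))) {v : ℝ}
    (hv : ∀ k, v ≤ ∫ ω, f k ω ∂Q) : (v : EReal) ≤ eexpE Q G := by
  have hpos := tendsto_lintegral_posE hF hf hfF hlim
  set A := ∫⁻ ω, posE (G ω) ∂Q
  have hA : A ≠ ⊤ := ne_top_of_le_ne_top hF.lintegral_lt_top.ne <|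
    le_of_tendsto' hpos fun k =>
      lintegral_mono_ae ((hfF k).mono fun _ => ENNReal.ofReal_le_ofReal)
  have hdiff : Tendsto (fun k => (∫⁻ ω, ENNReal.ofReal (f k ω) ∂Q).toReal - v) atTop
      (𝓝 (A.toReal - v)) := ((ENNReal.tendsto_toReal hA).comp hpos).sub_const v
  have hvA : v ≤ A.toReal := sub_nonneg.1 <| ge_of_tendsto' hdiff fun k => sub_nonneg.2 <|
    (hv k).trans <| by
      rw [integral_eq_lintegral_pos_part_sub_lintegral_neg_part (hf k)]
      exact sub_le_self _ ENNReal.toReal_nonneg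
  have hneg : ∫⁻ ω, posE (-G ω) ∂Q ≤ ENNReal.ofReal (A.toReal - v) :=
    (lintegral_posE_neg_le_liminf hf hlim).trans <|
      (liminf_le_liminf (.of_forall fun k => lintegral_ofReal_neg_add_le (hf k) (hv k))).trans
        ((ENNReal.continuous_ofReal.tendsto _).comp hdiff).liminf_eq.le
  calc (v : EReal) = A - ENNReal.ofReal (A.toReal - v) := by
        rw [← EReal.coe_ennreal_toReal hA, EReal.coe_ennreal_ofReal,
          max_eq_left (sub_nonneg.2 hvA), ← EReal.coe_sub, sub_sub_cancel]
    _ ≤ eexpE Q G := EReal.sub_le_sub le_rfl (EReal.coe_ennreal_le_coe_ennreal_iff.2 hneg)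

end Expectation

/-! ### Lipschitz approximation of upper semicontinuous functions -/

section SupConvolution

variable {E : Type*} [NormedAddCommGroup E] {P : Set E} {g : E → ℝ} {L : ℝ≥0} {C ε : ℝ}

/-- The smallest `L`-Lipschitz majorant on `E` of the restriction of `g` to `P` (a
sup-convolution with the cone `-L ‖·‖`). The junk value of `⨆` occurs only when `P` is empty or
`g` has no such majorant. -/
def supConv (P : Set E) (g : E → ℝ) (L : ℝ≥0) (x : E) : ℝ := ⨆ y : P, (g y - L * dist x y)

lemma sub_mul_dist_le (hε : 0 ≤ ε) (hg : ∀ y ∈ P, g y ≤ C + ε * ‖y‖) (x : E) (y : P) :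
    g y - L * dist x y ≤ C + ε * ‖x‖ - (L - ε) * dist x y := by
  have h : ‖(y : E)‖ ≤ ‖x‖ + dist x y := by
    rw [dist_eq_norm, norm_sub_rev]
    exact norm_le_norm_add_norm_sub' _ _
  linarith [hg y y.2, mul_le_mul_of_nonneg_left h hε]

lemma sub_mul_dist_le_of_le (hε : 0 ≤ ε) (hεL : ε ≤ L) (hg : ∀ y ∈ P, g y ≤ C + ε * ‖y‖) (x : E)
    (y : P) : g y - L * dist x y ≤ C + ε * ‖x‖ :=
  (sub_mul_dist_le hε hg x y).trans
    (sub_le_self _ (mul_nonneg (sub_nonneg.2 hεL) dist_nonneg))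

lemma sub_mul_dist_le_supConv (hε : 0 ≤ ε) (hεL : ε ≤ L) (hg : ∀ y ∈ P, g y ≤ C + ε * ‖y‖) (x : E)
    (y : P) : g y - L * dist x y ≤ supConv P g L x :=
  le_ciSup (f := fun y : P => g y - L * dist x y)
    ⟨C + ε * ‖x‖, forall_mem_range.2 (sub_mul_dist_le_of_le hε hεL hg x)⟩ y

lemma supConv_le [Nonempty P] (hε : 0 ≤ ε) (hεL : ε ≤ L) (hg : ∀ y ∈ P, g y ≤ C + ε * ‖y‖)
    (x : E) : supConv P g L x ≤ C + ε * ‖x‖ :=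
  ciSup_le (sub_mul_dist_le_of_le hε hεL hg x)

lemma le_supConv (hε : 0 ≤ ε) (hεL : ε ≤ L) (hg : ∀ y ∈ P, g y ≤ C + ε * ‖y‖) {x : E}
    (hx : x ∈ P) : g x ≤ supConv P g L x := by
  simpa using sub_mul_dist_le_supConv hε hεL hg x ⟨x, hx⟩

lemma lipschitzWith_supConv [Nonempty P] (hε : 0 ≤ ε) (hεL : ε ≤ L)
    (hg : ∀ y ∈ P, g y ≤ C + ε * ‖y‖) : LipschitzWith L (supConv P g L) :=
  LipschitzWith.of_le_add_mul _ fun x x' => ciSup_le fun y => by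
    have h := mul_le_mul_of_nonneg_left (dist_triangle_left x' (y : E) x) L.coe_nonneg
    linarith [sub_mul_dist_le_supConv hε hεL hg x' y]

/-- If `L` is large, the supremum is determined by the points within distance `δ` of `x`. -/
lemma supConv_le_of_ball [Nonempty P] (hε : 0 ≤ ε) (hg : ∀ y ∈ P, g y ≤ C + ε * ‖y‖) {x : E}
    {δ b : ℝ} (hδ : 0 < δ) (hb : ∀ y ∈ P, dist y x < δ → g y ≤ b) (hεL : ε ≤ L)
    (hL : (C + ε * ‖x‖ - b) / δ + ε ≤ L) : supConv P g L x ≤ b := by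
  refine ciSup_le fun y => ?_
  obtain hd | hd := lt_or_ge (dist x y) δ
  · have : 0 ≤ L * dist x y := by positivity
    linarith [hb y y.2 (by rwa [dist_comm])]
  · have hgap : C + ε * ‖x‖ - b ≤ (L - ε) * δ := (div_le_iff₀ hδ).1 (by linarith)
    have := mul_le_mul_of_nonneg_left hd (sub_nonneg.2 hεL)
    linarith [sub_mul_dist_le (L := L) hε hg x y]

end SupConvolution

section Approximation

variable {E : Type*} {G : E → EReal} {P : Set E} {x : E} {k : ℕ}

/-- The real function `max G (-k)`, on the set where `G ≠ ⊤`. -/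
def truncBelow (G : E → EReal) (k : ℕ) (x : E) : ℝ := (max (G x) ((-k : ℝ) : EReal)).toReal

lemma coe_truncBelow (hG : G x ≠ ⊤) :
    (truncBelow G k x : EReal) = max (G x) ((-k : ℝ) : EReal) :=
  EReal.coe_toReal (max_lt hG.lt_top (EReal.coe_lt_top _)).ne
    ((EReal.bot_lt_coe _).trans_le (le_max_right _ _)).ne'

lemma le_truncBelow (hG : G x ≠ ⊤) : G x ≤ truncBelow G k x :=
  (le_max_left _ _).trans_eq (coe_truncBelow hG).symm

lemma truncBelow_le {c : ℝ} (h : G x ≤ c) (hk : -k ≤ c) : truncBelow G k x ≤ c := by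
  rw [← EReal.coe_le_coe_iff, coe_truncBelow (h.trans_lt (EReal.coe_lt_top c)).ne]
  exact max_le h (EReal.coe_le_coe_iff.2 hk)

variable [NormedAddCommGroup E]

lemma SublinearAboveOn.ne_top (hG : SublinearAboveOn G P) (hx : x ∈ P) : G x ≠ ⊤ := by
  obtain ⟨C, hC⟩ := hG 1 one_pos
  exact ((hC x hx).trans_lt (EReal.coe_lt_top _)).ne

lemma SublinearAboveOn.exists_truncBelow_le (hG : SublinearAboveOn G P) {ε : ℝ} (hε : 0 < ε) :
    ∃ C, ∀ k : ℕ, ∀ y ∈ P, truncBelow G k y ≤ C + ε * ‖y‖ := by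
  obtain ⟨C, hC⟩ := hG ε hε
  refine ⟨max C 0, fun k y hy => truncBelow_le ((hC y hy).trans (EReal.coe_le_coe_iff.2 ?_)) ?_⟩
  · gcongr
    exact le_max_left C 0
  · have : 0 ≤ max C 0 + ε * ‖y‖ := by positivity
    exact (neg_nonpos.2 k.cast_nonneg).trans this

lemma tendsto_supConv_truncBelow (hG : SublinearAboveOn G P) (husc : UpperSemicontinuousOn G P)
    (hx : x ∈ P) :
    Tendsto (fun k : ℕ => (supConv P (truncBelow G k) (k + 1) x : EReal)) atTop (𝓝 (G x)) := by
  have : Nonempty P := ⟨⟨x, hx⟩⟩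
  obtain ⟨C, hC⟩ := hG.exists_truncBelow_le one_pos
  have one_le (k : ℕ) : (1 : ℝ) ≤ (k + 1 : ℝ≥0) := by simp
  refine tendsto_order.2 ⟨fun a ha => .of_forall fun k => ha.trans_le <|
    (le_truncBelow (hG.ne_top hx)).trans <|
      EReal.coe_le_coe_iff.2 (le_supConv zero_le_one (one_le k) (hC k) hx), fun a ha => ?_⟩
  obtain ⟨b, hGb, hba⟩ := EReal.lt_iff_exists_real_btwn.1 ha
  obtain ⟨δ, hδ, hb⟩ := Metric.eventually_nhds_iff.1
    (eventually_nhdsWithin_iff.1 (husc x hx b hGb))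
  have hcast := tendsto_natCast_atTop_atTop (R := ℝ)
  filter_upwards [hcast.eventually_ge_atTop (-b),
    hcast.eventually_ge_atTop ((C + 1 * ‖x‖ - b) / δ)] with k hkb hkδ
  refine (EReal.coe_le_coe_iff.2 ?_).trans_lt hba
  exact supConv_le_of_ball zero_le_one (hC k) hδ
    (fun y hy hyx => truncBelow_le (hb hyx hy).le (by linarith)) (one_le k)
    (by simpa using hkδ)

theorem SublinearAboveOn.exists_linearGrowth_approx (hG : SublinearAboveOn G P)
    (husc : UpperSemicontinuousOn G P) (hP : P.Nonempty) :
    ∃ f : ℕ → LinearGrowth E, (∃ C, ∀ k x, (f k).1 x ≤ C + ‖x‖) ∧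
      (∀ k, SublinearAboveOn (fun x => ((f k).1 x : EReal)) P) ∧
      (∀ k, ∀ x ∈ P, G x ≤ (f k).1 x) ∧
      ∀ x ∈ P, Tendsto (fun k => ((f k).1 x : EReal)) atTop (𝓝 (G x)) := by
  have : Nonempty P := hP.to_subtype
  obtain ⟨C, hC⟩ := hG.exists_truncBelow_le one_pos
  have one_le (k : ℕ) : (1 : ℝ) ≤ (k + 1 : ℝ≥0) := by simp
  refine ⟨fun k => LinearGrowth.ofLipschitz _ (lipschitzWith_supConv zero_le_one (one_le k) (hC k)),
    ⟨C, fun k x => ?_⟩, fun k ε hε => ?_, fun k x hx => ?_,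
    fun x => tendsto_supConv_truncBelow hG husc⟩
  · exact (supConv_le zero_le_one (one_le k) (hC k) x).trans_eq (by rw [one_mul])
  · obtain ⟨B, hB⟩ := hG.exists_truncBelow_le (lt_min hε one_pos)
    refine ⟨B, fun x _ => EReal.coe_le_coe_iff.2 ?_⟩
    refine (supConv_le (le_min hε.le zero_le_one) ((min_le_right _ _).trans (one_le k)) (hB k)
      x).trans ?_
    gcongr
    exact min_le_left ε 1
  · exact (le_truncBelow (hG.ne_top hx)).trans
      (EReal.coe_le_coe_iff.2 (le_supConv zero_le_one (one_le k) (hC k) hx))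

end Approximation

/-! ### Weak duality -/

section WeakDuality

variable {n : ℕ} {s₀ : ℝ} {p : Fin n → ℝ → ℝ} {μ : Fin n → Measure ℝ} {P : Set (Path n)}
  {Q : Measure (Path n)} {G : Path n → EReal}

lemma integrable_coord_of_map_eq [IsFiniteMeasure Q] (hμ : PutPricesFrom p μ)
    (hP : P ⊆ Omega n s₀) (hPQ : ∀ᵐ ω ∂Q, ω ∈ P)
    (hQμ : ∀ i : Fin n, Q.map (fun ω => ω i.succ) = μ i) (i : Fin (n + 1)) :
    Integrable (fun ω : Path n => ω i) Q := by
  cases i using Fin.cases with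
  | zero => exact (integrable_const s₀).congr (hPQ.mono fun ω hω => (hP hω).1.symm)
  | succ i =>
    have h := hμ.2.2.1 i
    rw [← hQμ i] at h
    exact (integrable_map_measure (f := fun ω : Path n => ω i.succ) (g := fun x : ℝ => x)
      aestronglyMeasurable_id (measurable_pi_apply _).aemeasurable).1 h

lemma integral_put_of_map_eq (hμ : PutPricesFrom p μ) {i : Fin n}
    (hQμ : Q.map (fun ω => ω i.succ) = μ i) {K : ℝ} (hK : 0 ≤ K) :
    ∫ ω, max (K - ω i.succ) 0 ∂Q = p i K := by
  rw [hμ.2.2.2 i K hK, ← hQμ, integral_map (measurable_pi_apply _).aemeasurable (by fun_prop)]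

lemma integrable_put_coord [IsFiniteMeasure Q]
    (hQ : ∀ i, Integrable (fun ω : Path n => ω i) Q) (i : Fin n) (K : ℝ) :
    Integrable (fun ω : Path n => max (K - ω i.succ) 0) Q :=
  ((integrable_const K).sub (hQ _)).pos_part

lemma Static.integrable_putPayoff [IsFiniteMeasure Q]
    (hQ : ∀ i, Integrable (fun ω : Path n => ω i) Q) (X : Static n) :
    Integrable X.putPayoff Q :=
  (integrable_const _).add
    (integrable_finsetSum _ fun _ _ => (integrable_put_coord hQ _ _).const_mul _)

lemma Static.integral_putPayoff [IsProbabilityMeasure Q]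
    (hQ : ∀ i, Integrable (fun ω : Path n => ω i) Q) (X : Static n)
    (hput : ∀ (i : Fin n) (K : ℝ), 0 ≤ K → ∫ ω, max (K - ω i.succ) 0 ∂Q = p i K) :
    ∫ ω, X.putPayoff ω ∂Q = X.price p := by
  have hint (k : Fin X.m) :
      Integrable (fun ω : Path n => X.coeff k * max (X.strike k - ω (X.idx k).succ) 0) Q :=
    (integrable_put_coord hQ _ _).const_mul _
  unfold Static.putPayoff Static.price
  rw [integral_add (integrable_const _) (integrable_finsetSum _ fun k _ => hint k),
    integral_finsetSum _ fun k _ => hint k]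
  simp only [integral_const_mul, integral_const, probReal_univ, one_smul,
    hput _ _ (X.strike_nonneg _)]

lemma Dyn.integrable_pos_mul_increment (hQ : ∀ i, Integrable (fun ω : Path n => ω i) Q)
    (D : Dyn n) (j : Fin n) :
    Integrable (fun ω => D.pos j (restr j ω) * increment j ω) Q := by
  obtain ⟨C, hC⟩ := D.bdd j
  exact (integrable_increment hQ j).bdd_mul (c := C)
    ((D.meas j).comp (continuous_restr j).measurable).aestronglyMeasurable
    (.of_forall fun ω => hC _)

lemma Dyn.integrable_gains (hQ : ∀ i, Integrable (fun ω : Path n => ω i) Q) (D : Dyn n) :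
    Integrable D.gains Q :=
  integrable_finsetSum _ fun j _ => Dyn.integrable_pos_mul_increment hQ D j

lemma IsSupermartingaleLaw.integral_gains_nonpos (h : IsSupermartingaleLaw Q)
    (hQ : ∀ i, Integrable (fun ω : Path n => ω i) Q) {D : Dyn n} (hD : D.Nonneg) :
    ∫ ω, D.gains ω ∂Q ≤ 0 := by
  refine (integral_finsetSum _ fun j _ => Dyn.integrable_pos_mul_increment hQ D j).trans_le
    (Finset.sum_nonpos fun j _ => ?_)
  obtain ⟨C, hC⟩ := D.bdd j
  exact h.integral_mul_increment_nonpos hQ j (D.meas j) (hD j) fun x => (le_abs_self _).trans (hC x)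

theorem eexpE_le_price (hμ : PutPricesFrom p μ) (hP : P ⊆ Omega n s₀) (hPm : MeasurableSet P)
    (hQ : Q ∈ MSetP s₀ μ P) {X : Static n} {D : Dyn n} (hD : D.Nonneg)
    (hG : ∀ ω ∈ P, G ω ≤ ((X.putPayoff ω + D.gains ω : ℝ) : EReal)) :
    eexpE Q G ≤ X.price p := by
  obtain ⟨⟨⟨_, _, hQμ⟩, hsuper⟩, hQP⟩ := hQ
  have hPQ : ∀ᵐ ω ∂Q, ω ∈ P := (prob_compl_eq_zero_iff hPm).2 hQP
  have hcoord := integrable_coord_of_map_eq hμ hP hPQ hQμ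
  have hX := Static.integrable_putPayoff hcoord X
  have hgains := Dyn.integrable_gains hcoord D
  calc eexpE Q G ≤ eexpE Q fun ω => ((X.putPayoff ω + D.gains ω : ℝ) : EReal) :=
        eexpE_mono (hPQ.mono hG)
    _ = (∫ ω, (X.putPayoff ω + D.gains ω) ∂Q : ℝ) := eexpE_coe (hX.add hgains)
    _ = (X.price p + ∫ ω, D.gains ω ∂Q : ℝ) := by
        rw [integral_add hX hgains, Static.integral_putPayoff hcoord X
          fun i K hK => integral_put_of_map_eq hμ (hQμ i) hK]
    _ ≤ X.price p := EReal.coe_le_coe_iff.2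
        (add_le_of_nonpos_right (hsuper.integral_gains_nonpos hcoord hD))

end WeakDuality

/-! ### Strong duality -/

section StrongDuality

variable {n : ℕ} {s₀ v : ℝ} {p : Fin n → ℝ → ℝ} {μ : Fin n → Measure ℝ} {P : Set (Path n)}
  {Q : Measure (Path n)} {G : Path n → EReal} {ℓ : LinearGrowth (Path n) →ₗ[ℝ] ℝ}

/-- The put with maturity index `i` and strike `K`, as a function of linear growth. -/
def putFun (i : Fin n) (K : ℝ) : LinearGrowth (Path n) :=
  LinearGrowth.ofLipschitz (fun ω => max (K - ω i.succ) 0)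
    (((LipschitzWith.const K).sub (LipschitzWith.eval i.succ)).max_const 0)

/-- On `P` both the put and its negative are bounded above, so no part of its value comes from
infinity. -/
lemma IsPricing.integral_put_eq (hℓ : IsPricing p P ℓ) (hP : P ⊆ Omega n s₀)
    (hQ : ∀ f : LinearGrowth (Path n), SublinearAboveOn (fun ω => (f.1 ω : EReal)) P →
      ℓ f ≤ ∫ ω, f.1 ω ∂Q) (i : Fin n) {K : ℝ} (hK : 0 ≤ K) :
    ∫ ω, max (K - ω i.succ) 0 ∂Q = p i K := by
  have hle : ℓ (putFun i K) ≤ ∫ ω, max (K - ω i.succ) 0 ∂Q :=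
    hQ (putFun i K) (.of_le fun ω hω => max_le (sub_le_self K ((hP hω).2 i.succ)) hK)
  have hge : ℓ (-putFun i K) ≤ ∫ ω, -max (K - ω i.succ) 0 ∂Q :=
    hQ (-putFun i K) (.of_le fun ω _ => neg_nonpos.2 (le_max_right _ _))
  have hbuy : ℓ (putFun i K) ≤ 1 * p i K :=
    hℓ _ _ ((superhedge_const_mul_put 1 i hK).mono (fun ω _ => (one_mul _).ge) le_rfl)
  have hsell : ℓ (-putFun i K) ≤ -1 * p i K :=
    hℓ _ _ ((superhedge_const_mul_put (-1) i hK).mono (fun ω _ => (neg_one_mul _).ge) le_rfl)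
  rw [map_neg] at hge hsell
  rw [integral_neg] at hge
  linarith

lemma map_coord_eq_of_integral_put_eq [IsProbabilityMeasure Q] (hμ : PutPricesFrom p μ)
    {i : Fin n} (hQ0 : ∀ᵐ ω ∂Q, 0 ≤ ω i.succ)
    (hput : ∀ K, 0 ≤ K → ∫ ω, max (K - ω i.succ) 0 ∂Q = p i K) :
    Q.map (fun ω => ω i.succ) = μ i := by
  have hmeas : Measurable fun ω : Path n => ω i.succ := measurable_pi_apply _
  have := hμ.1 i
  have := Measure.isProbabilityMeasure_map hmeas.aemeasurable (μ := Q)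
  have hmap0 : ∀ᵐ x ∂Q.map fun ω => ω i.succ, 0 ≤ x :=
    (ae_map_iff hmeas.aemeasurable measurableSet_Ici).2 hQ0
  have hμ0 : ∀ᵐ x ∂μ i, 0 ≤ x :=
    (measure_eq_zero_iff_ae_notMem.1 (hμ.2.1 i)).mono fun _ => notMem_Iio.1
  refine measure_eq_of_integral_put_eq (integrable_put hmap0) (integrable_put hμ0) fun K => ?_
  obtain hK | hK := le_or_gt 0 K
  · rw [integral_map hmeas.aemeasurable (by fun_prop), hput K hK, hμ.2.2.2 i K hK]
  · rw [integral_put_eq_zero hmap0 hK.le, integral_put_eq_zero hμ0 hK.le]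

lemma apply_castSucc_le {ω : Path n} (hω : ω ∈ Omega n s₀) (j : Fin n) :
    ω j.castSucc ≤ max s₀ ‖restr j ω‖ := by
  obtain ⟨_ | j, hj⟩ := j
  · exact le_max_of_le_left hω.1.le
  · refine le_max_of_le_right ((le_abs_self _).trans ?_)
    exact norm_le_pi_norm (restr ⟨j + 1, hj⟩ ω) (Fin.last j)

lemma exists_mul_apply_castSucc_le (hP : P ⊆ Omega n s₀) (j : Fin n) (φ : C_c(Fin j → ℝ, ℝ))
    (hφ : ∀ x, φ x ≤ 1) : ∃ C, ∀ ω ∈ P, φ (restr j ω) * ω j.castSucc ≤ C := by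
  obtain ⟨R, hR⟩ := φ.hasCompactSupport.isCompact.isBounded.exists_norm_le
  refine ⟨max |s₀| R, fun ω hω => ?_⟩
  obtain hz | hz := eq_or_ne (φ (restr j ω)) 0
  · rw [hz, zero_mul]
    exact le_max_of_le_left (abs_nonneg s₀)
  · calc φ (restr j ω) * ω j.castSucc ≤ ω j.castSucc :=
          mul_le_of_le_one_left ((hP hω).2 _) (hφ _)
      _ ≤ max s₀ ‖restr j ω‖ := apply_castSucc_le (hP hω) j
      _ ≤ max |s₀| R := max_le_max (le_abs_self s₀) (hR _ (subset_tsupport _ hz))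

/-- For `φ ≥ 0` compactly supported, `-φ(S₁, …, S_j) (S_{j+1} - S_j)` is bounded above on `P`. -/
lemma IsPricing.isSupermartingaleLaw (hℓ : IsPricing p P ℓ) (hP : P ⊆ Omega n s₀)
    (hint : ∀ f : LinearGrowth (Path n), Integrable f.1 Q)
    (hQ : ∀ f : LinearGrowth (Path n), SublinearAboveOn (fun ω => (f.1 ω : EReal)) P →
      ℓ f ≤ ∫ ω, f.1 ω ∂Q) : IsSupermartingaleLaw Q := by
  refine isSupermartingaleLaw_of_compactlySupported (fun i => hint (LinearGrowth.coord i))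
    fun j φ hφ => ?_
  have abs_le_one (x : Fin j → ℝ) : |φ x| ≤ 1 := by
    rw [abs_of_nonneg (hφ x).1]
    exact (hφ x).2
  let position : C(Path n, ℝ) := ⟨fun ω => φ (restr j ω), φ.continuous.comp (continuous_restr j)⟩
  let gain : LinearGrowth (Path n) :=
    ⟨position * (LinearGrowth.coord j.succ - LinearGrowth.coord j.castSucc : LinearGrowth _).1,
      LinearGrowth.mul_mem (fun ω => abs_le_one (restr j ω)) (Subtype.property _)⟩
  have gain_le : ℓ gain ≤ 0 :=
    hℓ gain 0 (superhedge_increment j φ.continuous.measurable ⟨1, abs_le_one⟩ fun x => (hφ x).1)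
  obtain ⟨C, hC⟩ := exists_mul_apply_castSucc_le hP j φ fun x => (hφ x).2
  have hloss : ℓ (-gain) ≤ ∫ ω, -(φ (restr j ω) * increment j ω) ∂Q := by
    refine hQ (-gain) (.of_le (C := C) fun ω hω => ?_)
    change -(φ (restr j ω) * (ω j.succ - ω j.castSucc)) ≤ C
    have : 0 ≤ φ (restr j ω) * ω j.succ := mul_nonneg (hφ _).1 ((hP hω).2 _)
    linarith [hC ω hω]
  rw [map_neg, integral_neg] at hloss
  linarith

theorem exists_mem_MSetP_le_eexpE (hP : P ⊆ Omega n s₀) (hPc : IsClosed P)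
    (hμ : PutPricesFrom p μ) (husc : UpperSemicontinuousOn G P) (hG : SublinearAboveOn G P)
    (hv : ∀ (a : Path n → ℝ) r, (∀ ω ∈ P, G ω ≤ a ω) → Superhedge p P a r → v ≤ r) :
    ∃ Q ∈ MSetP s₀ μ P, (v : EReal) ≤ eexpE Q G := by
  obtain ⟨ℓ, hℓ, hvℓ⟩ := exists_isPricing hP hG hv
  obtain ⟨Q, _, hPQ, hint, hQ⟩ := hℓ.positiveOn.exists_measure hPc hℓ.map_one
  have hmarg (i : Fin n) : Q.map (fun ω => ω i.succ) = μ i :=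
    map_coord_eq_of_integral_put_eq hμ (hPQ.mono fun ω hω => (hP hω).2 _)
      fun K hK => hℓ.integral_put_eq hP hQ i hK
  have hQP : Q P = 1 := (prob_compl_eq_zero_iff hPc.measurableSet).1 hPQ
  have hQΩ : Q (Omega n s₀) = 1 := prob_le_one.antisymm (hQP.ge.trans (measure_mono hP))
  refine ⟨Q, ⟨⟨⟨‹_›, hQΩ, hmarg⟩, hℓ.isSupermartingaleLaw hP hint hQ⟩, hQP⟩, ?_⟩
  obtain ⟨f, ⟨C, hfC⟩, hfsub, hGf, hlim⟩ := hG.exists_linearGrowth_approx husc hPQ.exists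
  exact le_eexpE_of_tendsto (F := fun ω => C + ‖ω‖)
    ((integrable_const C).add (hint (LinearGrowth.normFun _))) (fun k => hint (f k))
    (fun k => .of_forall (hfC k)) (hPQ.mono hlim)
    fun k => (hvℓ (f k) (hGf k)).trans (hQ (f k) (hfsub k))

end StrongDuality

section Terminal

variable {n : ℕ} {s₀ : ℝ} {P : Set (Path n)} {G : (Fin n → ℝ) → EReal}

lemma upperSemicontinuousOn_comp_tailCoords (hP : P ⊆ Omega n s₀)
    (hG : UpperSemicontinuousOn G {s | ∀ i, 0 ≤ s i}) :
    UpperSemicontinuousOn (fun ω => G (tailCoords ω)) P :=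
  hG.comp (by unfold tailCoords; fun_prop) fun ω hω i => (hP hω).2 i.succ

lemma sum_tailCoords_le (ω : Path n) : ∑ i, tailCoords ω i ≤ n * ‖ω‖ := by
  calc ∑ i, tailCoords ω i ≤ ∑ _ : Fin n, ‖ω‖ :=
        Finset.sum_le_sum fun i _ => (le_abs_self _).trans (norm_le_pi_norm ω i.succ)
    _ = n * ‖ω‖ := by simp

lemma sublinearAboveOn_comp_tailCoords (hP : P ⊆ Omega n s₀)
    (hG : ∀ M : ℝ, 1 < M → ∃ C : ℝ, ∀ s : Fin n → ℝ, (∀ i, 0 ≤ s i) →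
      G s ≤ ((C + (∑ i, s i) / M : ℝ) : EReal)) :
    SublinearAboveOn (fun ω => G (tailCoords ω)) P := by
  intro ε hε
  have hM : 1 < n / ε + 2 := by linarith [show 0 ≤ n / ε by positivity]
  obtain ⟨C, hC⟩ := hG _ hM
  refine ⟨C, fun ω hω => (hC _ fun i => (hP hω).2 i.succ).trans (EReal.coe_le_coe_iff.2 ?_)⟩
  gcongr
  calc (∑ i, tailCoords ω i) / (n / ε + 2) ≤ n * ‖ω‖ / (n / ε + 2) := by
        gcongr
        exact sum_tailCoords_le ω
    _ ≤ ε * ‖ω‖ := by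
        rw [div_le_iff₀ (by linarith)]
        have : ε * ‖ω‖ * (n / ε + 2) = n * ‖ω‖ + 2 * (ε * ‖ω‖) := by field_simp
        have : 0 ≤ ε * ‖ω‖ := by positivity
        linarith

end Terminal

theorem duality_puts_sublinear_general {n : ℕ} {s₀ : ℝ} {P : Set (Path n)}
    (hP : P ⊆ Omega n s₀) (hPc : IsClosed P) {p : Fin n → ℝ → ℝ} {μ : Fin n → Measure ℝ}
    (hμ : PutPricesFrom p μ) {G : Path n → EReal} (husc : UpperSemicontinuousOn G P)
    (hG : SublinearAboveOn G P) :
    V Static.putPayoff p P G = ⨆ Q ∈ MSetP s₀ μ P, eexpE Q G := by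
  refine le_antisymm (EReal.ge_of_forall_gt_iff_ge.1 fun v hv => ?_) (iSup₂_le fun Q hQ => ?_)
  · have le_cost (a : Path n → ℝ) (r : ℝ) (ha : ∀ ω ∈ P, G ω ≤ a ω) (hedge : Superhedge p P a r) :
        v ≤ r := by
      obtain ⟨X, D, hD, hXr, hX⟩ := hedge
      refine (EReal.coe_le_coe_iff.1 (hv.le.trans (sInf_le ⟨X, D, hD, rfl, fun ω hω => ?_⟩))).trans
        hXr
      exact (ha ω hω).trans (EReal.coe_le_coe_iff.2 (hX ω hω))
    obtain ⟨Q, hQ, hvQ⟩ := exists_mem_MSetP_le_eexpE hP hPc hμ husc hG le_cost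
    exact hvQ.trans (le_iSup₂_of_le Q hQ le_rfl)
  · refine le_sInf ?_
    rintro _ ⟨X, D, hD, rfl, hX⟩
    exact eexpE_le_price hμ hP hPc.measurableSet hQ hD hX

/-- Corollary 4.4: if the market input admits no WFLVR, `μ_i` are
the measures defined from the put prices, and `G` is upper semi-continuous with
`G_M := G − (s₁+…+s_n)/M` bounded from above for every `M > 1`, then the put-based
superhedging price equals the supremum over calibrated supermartingale models. -/
theorem duality_puts_sublinear
    {n : ℕ} (hn : 1 ≤ n) {s₀ : ℝ} (hs₀ : 0 < s₀)
    (P : Set (Path n)) (hPsub : P ⊆ Omega n s₀) (hPclosed : IsClosed P)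
    (p : Fin n → ℝ → ℝ) (μ : Fin n → Measure ℝ) (hμ : PutPricesFrom p μ)
    (hNA : ¬ WFLVR Static.putPayoff p P)
    (G : (Fin n → ℝ) → EReal) (hGtop : ∀ s, G s ≠ ⊤)
    (hGusc : UpperSemicontinuousOn G {s | ∀ i, 0 ≤ s i})
    (hGM : ∀ M : ℝ, 1 < M → ∃ C : ℝ, ∀ s : Fin n → ℝ, (∀ i, 0 ≤ s i) →
      G s ≤ ((C + (∑ i, s i) / M : ℝ) : EReal)) :
    V Static.putPayoff p P (fun ω => G (tailCoords ω)) =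
      ⨆ Q ∈ MSetP s₀ μ P, eexpE Q (fun ω => G (tailCoords ω)) := by
  exact duality_puts_sublinear_general hPsub hPclosed hμ
    (upperSemicontinuousOn_comp_tailCoords hPsub hGusc) (sublinearAboveOn_comp_tailCoords hPsub hGM)

end RobustFin
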